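/- arXiv:1511.03237 — 5 statements merged into one kernel-verified Lean document; each statement's English description precedes it below -/
import Mathlib

section
/- Let n, d be positive integers and suppose n = k·d + r with integers k, r satisfying k ≥ |r| + 1. Then for every finite sequence z₀, z₁, …, z_l of Gaussian integers with |z_{j+1} - z_j| = 1 for all j and with z_s - z_t = n for some indices s, t, there exist indices u, v with z_u - z_v = d. -/
/-!
The proof is by descent on the length of a walk `z 0, …, z L` with `z L - z 0 = k * d + r`, where
`|r| < |k|` and, without loss of generality, `|r| < |d|`. Appending `|r|` horizontal steps closes
the walk up to a loop that winds once around the cylinder `ℤ[i] / (k * d)`. Such a loop meets its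
rotation by `d`: otherwise the number of crossings of the loop with the upward ray just to the
right of a point would be constant along the rotated loop, while it is `0` at its highest point
and `1` at its lowest. The meeting point yields two points of the original walk which are not both
its ends and whose difference is again of the form `j * d + i` with `|i| < |j|`. The descent ends
when `|k| = 1`, that is, at a difference `d` or `-d`.
-/

section Walk

/-- The Gaussian integers `z 0, …, z L` form a walk with unit steps. -/
def IsWalk (L : ℕ) (z : ℕ → GaussianInt) : Prop :=
  ∀ t < L, (z (t + 1) - z t).norm = 1

variable {L : ℕ} {z : ℕ → GaussianInt}

theorem IsWalk.shift (hz : IsWalk L z) {s m : ℕ} (hsm : s + m ≤ L) :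
    IsWalk m fun t => z (s + t) :=
  fun t ht => hz (s + t) (by omega)

theorem re_im_of_norm_eq_one {w : GaussianInt} (hw : w.norm = 1) :
    (w.im = 0 ∧ (w.re = 1 ∨ w.re = -1)) ∨ (w.re = 0 ∧ (w.im = 1 ∨ w.im = -1)) := by
  have hsq : w.re ^ 2 + w.im ^ 2 = 1 := by linear_combination (Zsqrtd.norm_def w).symm.trans hw
  have hre : |w.re| ≤ 1 := (sq_le_one_iff_abs_le_one _).1 (by linarith [sq_nonneg w.im])
  have him : |w.im| ≤ 1 := (sq_le_one_iff_abs_le_one _).1 (by linarith [sq_nonneg w.re])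
  obtain ⟨hre₁, hre₂⟩ := abs_le.1 hre
  obtain ⟨him₁, him₂⟩ := abs_le.1 him
  generalize w.re = a, w.im = b at *
  interval_cases a <;> interval_cases b <;> simp_all

theorem IsWalk.re_im_succ (hz : IsWalk L z) {t : ℕ} (ht : t < L) :
    ((z (t + 1)).im = (z t).im ∧
        ((z (t + 1)).re = (z t).re + 1 ∨ (z (t + 1)).re = (z t).re - 1)) ∨
      ((z (t + 1)).re = (z t).re ∧
        ((z (t + 1)).im = (z t).im + 1 ∨ (z (t + 1)).im = (z t).im - 1)) := by
  have h := re_im_of_norm_eq_one (hz t ht)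
  rw [Zsqrtd.re_sub, Zsqrtd.im_sub] at h
  omega

/-- The walk `z 0, …, z L` continued by horizontal steps in the direction opposite to the sign
of `r`, so that it reaches `z L - r` after `|r|` of them. The truncated difference `t - L` vanishes
on the original walk. -/
def horizontalExtension (L : ℕ) (z : ℕ → GaussianInt) (r : ℤ) (t : ℕ) : GaussianInt :=
  z (min t L) - ((r.sign * (t - L : ℕ) : ℤ) : GaussianInt)

theorem horizontalExtension_of_le {t : ℕ} (ht : t ≤ L) (r : ℤ) :
    horizontalExtension L z r t = z t := by
  simp [horizontalExtension, ht]

theorem horizontalExtension_add (m : ℕ) (r : ℤ) :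
    horizontalExtension L z r (L + m) = z L - ((r.sign * m : ℤ) : GaussianInt) := by
  simp [horizontalExtension]

theorem horizontalExtension_add_natAbs (r : ℤ) :
    horizontalExtension L z r (L + r.natAbs) = z L - r := by
  rw [horizontalExtension_add, Int.sign_mul_natAbs]

theorem IsWalk.horizontalExtension (hz : IsWalk L z) (r : ℤ) :
    IsWalk (L + r.natAbs) (horizontalExtension L z r) := by
  intro t ht
  rcases lt_or_ge t L with htL | htL
  · rw [horizontalExtension_of_le htL, horizontalExtension_of_le htL.le]
    exact hz t htL
  · obtain ⟨m, rfl⟩ := Nat.exists_eq_add_of_le htL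
    have hr : r ≠ 0 := by rintro rfl; simp at ht
    have hdiff : z L - ((r.sign * (m + 1 : ℕ) : ℤ) : GaussianInt)
        - (z L - ((r.sign * m : ℤ) : GaussianInt)) = ((-r.sign : ℤ) : GaussianInt) := by
      push_cast
      ring
    rw [add_assoc, horizontalExtension_add, horizontalExtension_add, hdiff, Zsqrtd.norm_intCast,
      neg_mul_neg, ← Int.sign_mul, Int.sign_eq_one_of_pos (mul_self_pos.2 hr)]

theorem horizontalExtension_cases {t : ℕ} {r : ℤ} (ht : t ≤ L + r.natAbs) :
    (t ≤ L ∧ horizontalExtension L z r t = z t) ∨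
      ∃ i ∈ Set.uIcc 0 r, horizontalExtension L z r t = z L - r + i := by
  rcases le_total t L with htL | htL
  · exact Or.inl ⟨htL, horizontalExtension_of_le htL r⟩
  · obtain ⟨m, rfl⟩ := Nat.exists_eq_add_of_le htL
    refine Or.inr ⟨r - r.sign * m, ?_, ?_⟩
    · rw [Set.mem_uIcc]
      rcases lt_trichotomy r 0 with hr | rfl | hr
      · rw [Int.sign_eq_neg_one_of_neg hr]
        omega
      · simp
      · rw [Int.sign_eq_one_of_pos hr]
        omega
    · rw [horizontalExtension_add]
      push_cast
      ring

end Walk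

section Cylinder

theorem sub_one_ediv_of_not_dvd {N u : ℤ} (hN : N ≠ 0) (h : ¬ N ∣ u) : (u - 1) / N = u / N := by
  have hpos : 0 < u % N :=
    (Int.emod_nonneg u hN).lt_of_ne fun h0 => h (Int.dvd_of_emod_eq_zero h0.symm)
  have hlt : u % N < |N| := Int.emod_lt_abs u hN
  have hquot : (u % N - 1) / N = 0 := Int.ediv_eq_zero_of_lt_abs (by omega) (by omega)
  calc (u - 1) / N = (u % N - 1 + N * (u / N)) / N := by
        rw [← add_sub_right_comm, Int.emod_add_mul_ediv]
    _ = u / N := by rw [Int.add_mul_ediv_left _ _ hN, hquot, zero_add]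

theorem modEq_intCast_iff {N : ℤ} {z w : GaussianInt} :
    z ≡ w [PMOD (N : GaussianInt)] ↔ z.im = w.im ∧ N ∣ z.re - w.re := by
  rw [AddCommGroup.modEq_comm, AddCommGroup.modEq_iff_zsmul']
  constructor
  · rintro ⟨c, hc⟩
    have hre : z.re - w.re = c * N := by simpa using congrArg Zsqrtd.re hc
    have him : z.im - w.im = 0 := by simpa using congrArg Zsqrtd.im hc
    exact ⟨by omega, c, by linarith⟩
  · rintro ⟨him, c, hc⟩
    refine ⟨c, ?_⟩
    ext
    · simp only [zsmul_eq_mul, ← Int.cast_mul, Zsqrtd.re_sub, Zsqrtd.re_intCast]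
      linarith
    · simp only [zsmul_eq_mul, ← Int.cast_mul, Zsqrtd.im_sub, Zsqrtd.im_intCast, him, sub_self]

/-- The signed number of times the walk `z 0, …, z L` crosses from left to right, on the cylinder
`ℤ[i] / N`, the upward vertical ray starting at `p + 1 / 2`. -/
def rayCrossings (N : ℤ) (z : ℕ → GaussianInt) (L : ℕ) (p : GaussianInt) : ℤ :=
  ∑ t ∈ Finset.range L,
    if p.im ≤ (z t).im then ((z (t + 1)).re - p.re - 1) / N - ((z t).re - p.re - 1) / N else 0

variable {N : ℤ} {L : ℕ} {z : ℕ → GaussianInt} {p q : GaussianInt}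

theorem rayCrossings_eq_of_im_eq_add_one (hN : N ≠ 0) (hz : IsWalk L z)
    (hp : ∀ t ≤ L, ¬ z t ≡ p [PMOD (N : GaussianInt)])
    (hre : q.re = p.re) (him : q.im = p.im + 1) :
    rayCrossings N z L q = rayCrossings N z L p := by
  have hsheet : ∀ t ≤ L, (z t).im = p.im →
      ((z t).re - p.re - 1) / N = ((z t).re - p.re) / N := fun t ht him =>
    sub_one_ediv_of_not_dvd hN fun hdvd => hp t ht (modEq_intCast_iff.2 ⟨him, hdvd⟩)
  refine Finset.sum_congr rfl fun t ht => ?_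
  have htL : t < L := Finset.mem_range.1 ht
  rw [hre, him]
  rcases lt_trichotomy (z t).im p.im with hlt | heq | hgt
  · rw [if_neg (by omega), if_neg (by omega)]
  · rw [if_neg (by omega), if_pos heq.ge]
    rcases hz.re_im_succ htL with ⟨him', hright | hleft⟩ | ⟨hre', -⟩
    · rw [hsheet t htL.le heq, hright, add_sub_right_comm, add_sub_cancel_right, sub_self]
    · rw [hsheet (t + 1) htL (him'.trans heq), hleft, sub_right_comm, sub_self]
    · rw [hre', sub_self]
  · rw [if_pos (by omega), if_pos hgt.le]

theorem rayCrossings_eq_of_re_eq_add_one (hN : N ≠ 0) (hz : IsWalk L z)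
    (hclosed : z L ≡ z 0 [PMOD (N : GaussianInt)])
    (hq : ∀ t ≤ L, ¬ z t ≡ q [PMOD (N : GaussianInt)])
    (hre : q.re = p.re + 1) (him : q.im = p.im) :
    rayCrossings N z L q = rayCrossings N z L p := by
  have hsheet : ∀ t ≤ L, (z t).im = p.im →
      ((z t).re - p.re - 1) / N = ((z t).re - q.re - 1) / N := fun t ht himt => by
    have hdvd : ¬ N ∣ (z t).re - q.re := fun hdvd =>
      hq t ht (modEq_intCast_iff.2 ⟨himt.trans him.symm, hdvd⟩)
    rw [sub_one_ediv_of_not_dvd hN hdvd, hre, sub_sub]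
  -- Up to the sign of `N`, this is the indicator function of the strip between the two rays: the
  -- crossing numbers differ by the net number of entries into it, which is `0` for a closed walk.
  let g : ℕ → ℤ := fun t =>
    if p.im ≤ (z t).im then ((z t).re - p.re - 1) / N - ((z t).re - q.re - 1) / N else 0
  have hg_closed : g L = g 0 := by
    obtain ⟨him_closed, c, hc⟩ := modEq_intCast_iff.1 hclosed
    have hshift (a : ℤ) : ((z L).re - a - 1) / N = ((z 0).re - a - 1) / N + c := by
      rw [← Int.add_mul_ediv_left _ _ hN]
      congr 1
      linarith
    simp only [g, him_closed, hshift, add_sub_add_right_eq_sub]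
  have hg_diff : rayCrossings N z L p - rayCrossings N z L q
      = ∑ t ∈ Finset.range L, (g (t + 1) - g t) := by
    unfold rayCrossings
    rw [← Finset.sum_sub_distrib]
    refine Finset.sum_congr rfl fun t ht => ?_
    have htL : t < L := Finset.mem_range.1 ht
    have hsheet_t := hsheet t htL.le
    have hsheet_succ := hsheet (t + 1) htL
    simp only [g, him]
    rcases hz.re_im_succ htL with ⟨him', -⟩ | ⟨hre', him'⟩
    · rw [him']
      split_ifs <;> ring
    · rw [hre'] at hsheet_succ ⊢
      split_ifs <;> omega
  rw [Finset.sum_range_sub, hg_closed, sub_self] at hg_diff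
  exact (sub_eq_zero.1 hg_diff).symm

theorem rayCrossings_eq_of_norm_sub_eq_one (hN : N ≠ 0) (hz : IsWalk L z)
    (hclosed : z L ≡ z 0 [PMOD (N : GaussianInt)])
    (hp : ∀ t ≤ L, ¬ z t ≡ p [PMOD (N : GaussianInt)])
    (hq : ∀ t ≤ L, ¬ z t ≡ q [PMOD (N : GaussianInt)]) (hpq : (q - p).norm = 1) :
    rayCrossings N z L q = rayCrossings N z L p := by
  have hcoord := re_im_of_norm_eq_one hpq
  rw [Zsqrtd.re_sub, Zsqrtd.im_sub] at hcoord
  rcases hcoord with ⟨him, hre | hre⟩ | ⟨hre, him | him⟩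
  · exact rayCrossings_eq_of_re_eq_add_one hN hz hclosed hq (by omega) (by omega)
  · exact (rayCrossings_eq_of_re_eq_add_one hN hz hclosed hp (by omega) (by omega)).symm
  · exact rayCrossings_eq_of_im_eq_add_one hN hz hp (by omega) (by omega)
  · exact (rayCrossings_eq_of_im_eq_add_one hN hz hq (by omega) (by omega)).symm

theorem rayCrossings_eq_zero_of_im_lt (hp : ∀ t < L, (z t).im < p.im) :
    rayCrossings N z L p = 0 :=
  Finset.sum_eq_zero fun t ht => if_neg (hp t (Finset.mem_range.1 ht)).not_ge

theorem rayCrossings_eq_of_le_im (hN : N ≠ 0) {m : ℤ}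
    (hm : z L = z 0 + ((N * m : ℤ) : GaussianInt)) (hp : ∀ t < L, p.im ≤ (z t).im) :
    rayCrossings N z L p = m := by
  have hre : (z L).re - p.re - 1 = (z 0).re - p.re - 1 + N * m := by
    rw [hm, Zsqrtd.re_add, Zsqrtd.re_intCast]
    ring
  unfold rayCrossings
  rw [Finset.sum_congr rfl fun t ht => if_pos (hp t (Finset.mem_range.1 ht)),
    Finset.sum_range_sub fun t => ((z t).re - p.re - 1) / N, hre,
    Int.add_mul_ediv_left _ _ hN, add_sub_cancel_left]

theorem exists_modEq_add_of_closed_walk (hN : N ≠ 0) (hz : IsWalk L z) {m : ℤ} (hm : m ≠ 0)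
    (hclosed : z L = z 0 + ((N * m : ℤ) : GaussianInt)) (d : ℤ) :
    ∃ s ≤ L, ∃ t ≤ L, z t ≡ z s + d [PMOD (N : GaussianInt)] := by
  by_contra! havoid
  have hmod : z L ≡ z 0 [PMOD (N : GaussianInt)] :=
    modEq_intCast_iff.2 ⟨by simp [hclosed], m, by simp [hclosed]⟩
  have hconst : ∀ s ≤ L, rayCrossings N z L (z s + d) = rayCrossings N z L (z 0 + d) := by
    intro s
    induction s with
    | zero => exact fun _ => rfl
    | succ s ih =>
      intro hs
      rw [← ih (by omega)]
      refine rayCrossings_eq_of_norm_sub_eq_one hN hz hmod (havoid s (by omega)) (havoid _ hs) ?_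
      rw [add_sub_add_right_eq_sub]
      exact hz s hs
  have hne : (Finset.range (L + 1)).Nonempty := Finset.nonempty_range_add_one
  obtain ⟨a, ha, hmax⟩ := Finset.exists_max_image _ (fun t => (z t).im) hne
  obtain ⟨b, hb, hmin⟩ := Finset.exists_min_image _ (fun t => (z t).im) hne
  simp only [Finset.mem_range, Nat.lt_succ_iff] at ha hb hmax hmin
  have htop : rayCrossings N z L (z a + d) = 0 := by
    rw [← rayCrossings_eq_of_im_eq_add_one (q := ⟨(z a + d).re, (z a).im + 1⟩) hN hz
      (havoid a ha) rfl (by simp)]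
    exact rayCrossings_eq_zero_of_im_lt fun t ht => Int.lt_add_one_iff.2 (hmax t ht.le)
  have hbottom : rayCrossings N z L (z b + d) = m :=
    rayCrossings_eq_of_le_im hN hclosed fun t ht => by simpa using hmin t ht.le
  exact hm (by rw [← hbottom, ← htop, hconst a ha, hconst b hb])

end Cylinder

section Descent

/-- `w = k * d + r` for integers `k` and `r` with `|r| < |k|`. These are the differences that
force a walk to realize the difference `d` too. -/
def IsForcing (d : ℤ) (w : GaussianInt) : Prop :=
  ∃ k r : ℤ, |r| < |k| ∧ w = ((k * d + r : ℤ) : GaussianInt)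

variable {d k r : ℤ}

theorem IsForcing.neg {w : GaussianInt} (hw : IsForcing d w) : IsForcing d (-w) := by
  obtain ⟨k, r, hrk, rfl⟩ := hw
  exact ⟨-k, -r, by rwa [abs_neg, abs_neg], by push_cast; ring⟩

theorem isForcing_mul {j : ℤ} (hj : j ≠ 0) : IsForcing d ((j * d : ℤ) : GaussianInt) :=
  ⟨j, 0, by simpa using hj, by rw [add_zero]⟩

theorem abs_tmod_add_abs_tdiv_le (r : ℤ) (hd : d ≠ 0) : |r.tmod d| + |r.tdiv d| ≤ |r| := by
  have hdiv := Nat.mod_add_div r.natAbs d.natAbs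
  have hle : r.natAbs / d.natAbs ≤ d.natAbs * (r.natAbs / d.natAbs) :=
    Nat.le_mul_of_pos_left _ (Int.natAbs_pos.2 hd)
  have hmod : (r.tmod d).natAbs = r.natAbs % d.natAbs := Int.natAbs_tmod r d
  have hquot : (r.tdiv d).natAbs = r.natAbs / d.natAbs := Int.natAbs_tdiv r d
  simp only [Int.abs_eq_natAbs]
  omega

theorem IsForcing.exists_abs_lt (hd : d ≠ 0) {w : GaussianInt} (hw : IsForcing d w) :
    ∃ k r : ℤ, |r| < |k| ∧ |r| < |d| ∧ w = ((k * d + r : ℤ) : GaussianInt) := by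
  obtain ⟨k, r, hrk, rfl⟩ := hw
  refine ⟨k + r.tdiv d, r.tmod d, ?_, ?_, ?_⟩
  · have hquot := abs_tmod_add_abs_tdiv_le r hd
    have htri : |k| ≤ |k + r.tdiv d| + |r.tdiv d| := by
      simpa using abs_sub (k + r.tdiv d) (r.tdiv d)
    omega
  · rw [Int.abs_eq_natAbs, Int.abs_eq_natAbs, Int.natAbs_tmod]
    exact_mod_cast Nat.mod_lt _ (Int.natAbs_pos.2 hd)
  · congr 1
    linear_combination -Int.tdiv_mul_add_tmod r d

theorem eq_of_mul_add_eq_mul_add {j i : ℤ} (h : k * d + r = j * d + i) (hlt : |r - i| < |d|) :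
    k = j := by
  have hri : r - i = 0 :=
    Int.eq_zero_of_abs_lt_dvd ((abs_dvd d _).2 ⟨j - k, by linarith⟩) hlt
  have hd : d ≠ 0 := abs_pos.1 ((abs_nonneg _).trans_lt hlt)
  exact mul_right_cancel₀ hd (by linarith)

theorem abs_lt_abs_or_abs_sub_lt_abs_sub {i : ℤ} (hrk : |r| < |k|) (hi : i ∈ Set.uIcc 0 r)
    (j : ℤ) : |i| < |j| ∨ |r - i| < |k - j| := by
  have hadd : |r| = |i| + |r - i| := by
    rcases Set.mem_uIcc.1 hi with ⟨h0, hr⟩ | ⟨hr, h0⟩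
    · rw [abs_of_nonneg h0, abs_of_nonneg (sub_nonneg.2 hr), abs_of_nonneg (h0.trans hr)]
      ring
    · rw [abs_of_nonpos h0, abs_of_nonpos (sub_nonpos.2 hr), abs_of_nonpos (hr.trans h0)]
      ring
  have htri : |k| ≤ |j| + |k - j| := by simpa using abs_add_le j (k - j)
  omega

variable {L : ℕ} {z : ℕ → GaussianInt}

theorem exists_isForcing_dist_lt_of_sub_eq_mul (hrd : |r| < |d|)
    (hend : z L - z 0 = ((k * d + r : ℤ) : GaussianInt)) {s t : ℕ} (hs : s ≤ L) (ht : t ≤ L)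
    {j : ℤ} (hj : ¬ k ∣ j) (hst : z t - z s = ((j * d : ℤ) : GaussianInt)) :
    ∃ s ≤ L, ∃ t ≤ L, Nat.dist s t < L ∧ IsForcing d (z t - z s) := by
  have hj0 : j ≠ 0 := fun h => hj (h ▸ dvd_zero k)
  refine ⟨s, hs, t, ht, ?_, hst ▸ isForcing_mul hj0⟩
  by_contra hfar
  have hends : (s = 0 ∧ t = L) ∨ (s = L ∧ t = 0) := by
    unfold Nat.dist at hfar
    omega
  rcases hends with ⟨rfl, rfl⟩ | ⟨rfl, rfl⟩
  · have heq : k * d + r = j * d + 0 := by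
      rw [add_zero]
      exact_mod_cast hend.symm.trans hst
    exact hj (eq_of_mul_add_eq_mul_add heq (by rwa [sub_zero]) ▸ dvd_rfl)
  · have heq : k * d + r = -j * d + 0 := by
      have : ((k * d + r : ℤ) : GaussianInt) = ((-(j * d) : ℤ) : GaussianInt) := by
        rw [← hend, Int.cast_neg, ← hst, neg_sub]
      rw [add_zero, neg_mul]
      exact_mod_cast this
    exact hj (dvd_neg.1 (eq_of_mul_add_eq_mul_add heq (by rwa [sub_zero]) ▸ dvd_rfl))

theorem exists_isForcing_dist_lt_of_sub_zero_eq (hrk : |r| < |k|) (hrd : |r| < |d|)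
    (hend : z L - z 0 = ((k * d + r : ℤ) : GaussianInt)) {t : ℕ} (ht : t ≤ L)
    {i j : ℤ} (hi : i ∈ Set.uIcc 0 r) (hj : ¬ k ∣ j)
    (hzt : z t - z 0 = ((j * d + i : ℤ) : GaussianInt)) :
    ∃ s ≤ L, ∃ t ≤ L, Nat.dist s t < L ∧ IsForcing d (z t - z s) := by
  have hir : |i| ≤ |r| := by simpa using Set.abs_sub_left_of_mem_uIcc hi
  have hri : |r - i| ≤ |r| := by simpa using Set.abs_sub_right_of_mem_uIcc hi
  have ht0 : t ≠ 0 := by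
    rintro rfl
    have heq : j * d + i = 0 * d + 0 := by
      rw [sub_self] at hzt
      rw [zero_mul, zero_add]
      exact_mod_cast hzt.symm
    have hj0 : j = 0 := eq_of_mul_add_eq_mul_add heq (by rw [sub_zero]; omega)
    exact hj (hj0 ▸ dvd_zero k)
  have htL : t ≠ L := by
    rintro rfl
    have heq : k * d + r = j * d + i := by exact_mod_cast hend.symm.trans hzt
    exact hj (eq_of_mul_add_eq_mul_add heq (by omega) ▸ dvd_rfl)
  rcases abs_lt_abs_or_abs_sub_lt_abs_sub hrk hi j with h | h
  · exact ⟨0, by omega, t, ht, by unfold Nat.dist; omega, j, i, h, hzt⟩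
  · refine ⟨t, ht, L, le_rfl, by unfold Nat.dist; omega, k - j, r - i, h, ?_⟩
    push_cast at hend hzt ⊢
    linear_combination hend - hzt

theorem exists_horizontalExtension_sub_eq (hz : IsWalk L z) (hk : k ≠ 0) (hd : d ≠ 0)
    (hend : z L - z 0 = ((k * d + r : ℤ) : GaussianInt)) :
    ∃ s ≤ L + r.natAbs, ∃ t ≤ L + r.natAbs, ∃ c : ℤ,
      horizontalExtension L z r t - horizontalExtension L z r s
        = (((1 + k * c) * d : ℤ) : GaussianInt) := by
  have hclosed : horizontalExtension L z r (L + r.natAbs)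
      = horizontalExtension L z r 0 + ((k * d * 1 : ℤ) : GaussianInt) := by
    rw [horizontalExtension_add_natAbs, horizontalExtension_of_le (Nat.zero_le L)]
    push_cast at hend ⊢
    linear_combination hend
  obtain ⟨s, hs, t, ht, hst⟩ := exists_modEq_add_of_closed_walk (mul_ne_zero hk hd)
    (hz.horizontalExtension r) one_ne_zero hclosed d
  obtain ⟨c, hc⟩ := AddCommGroup.modEq_iff_zsmul'.1 hst.symm
  refine ⟨s, hs, t, ht, c, ?_⟩
  rw [zsmul_eq_mul] at hc
  push_cast at hc ⊢
  linear_combination hc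

theorem exists_isForcing_dist_lt (hz : IsWalk L z) (hk : 2 ≤ |k|) (hrk : |r| < |k|)
    (hrd : |r| < |d|) (hend : z L - z 0 = ((k * d + r : ℤ) : GaussianInt)) :
    ∃ s ≤ L, ∃ t ≤ L, Nat.dist s t < L ∧ IsForcing d (z t - z s) := by
  have hk0 : k ≠ 0 := abs_pos.1 (by omega)
  have hd0 : d ≠ 0 := abs_pos.1 ((abs_nonneg r).trans_lt hrd)
  obtain ⟨s, hs, t, ht, c, hst⟩ := exists_horizontalExtension_sub_eq hz hk0 hd0 hend
  have hndvd : ¬ k ∣ 1 + k * c := by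
    rw [dvd_add_left (dvd_mul_right k c), ← isUnit_iff_dvd_one, Int.isUnit_iff_abs_eq]
    omega
  rcases horizontalExtension_cases hs with ⟨hsL, hzs⟩ | ⟨i, hi, hzs⟩ <;>
    rcases horizontalExtension_cases ht with ⟨htL, hzt⟩ | ⟨i', hi', hzt⟩ <;>
    rw [hzs, hzt] at hst
  · exact exists_isForcing_dist_lt_of_sub_eq_mul hrd hend hsL htL hndvd hst
  · refine exists_isForcing_dist_lt_of_sub_zero_eq hrk hrd hend hsL hi'
      (mt (dvd_sub_right (dvd_refl k)).1 hndvd) ?_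
    push_cast at hend hst ⊢
    linear_combination hend - hst
  · refine exists_isForcing_dist_lt_of_sub_zero_eq hrk hrd hend htL hi
      (mt (dvd_add_right (dvd_refl k)).1 hndvd) ?_
    push_cast at hend hst ⊢
    linear_combination hend + hst
  · have heq : 0 * d + i' = (1 + k * c) * d + i := by
      rw [add_sub_add_left_eq_sub] at hst
      have hsub : i' - i = (1 + k * c) * d := by exact_mod_cast hst
      linear_combination hsub
    have hii : |i' - i| ≤ |r| := by
      simpa using Set.abs_sub_le_of_uIcc_subset_uIcc (Set.uIcc_subset_uIcc hi hi')
    have hzero : 0 = 1 + k * c := eq_of_mul_add_eq_mul_add heq (hii.trans_lt hrd)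
    exact absurd (hzero ▸ dvd_zero k) hndvd

theorem IsForcing.exists_sub_eq (hd : d ≠ 0) (hz : IsWalk L z) {s t : ℕ} (hs : s ≤ L) (ht : t ≤ L)
    (hst : IsForcing d (z t - z s)) : ∃ u ≤ L, ∃ v ≤ L, z u - z v = (d : GaussianInt) := by
  induction hm : Nat.dist s t using Nat.strong_induction_on generalizing s t with
  | _ m ih =>
  wlog hle : s ≤ t generalizing s t
  · exact this ht hs (neg_sub (z t) (z s) ▸ hst.neg) (by rwa [Nat.dist_comm]) (by omega)
  obtain ⟨k, r, hrk, hrd, hkr⟩ := hst.exists_abs_lt hd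
  obtain ⟨n, rfl⟩ := Nat.exists_eq_add_of_le hle
  have hr0 := abs_nonneg r
  rcases (show |k| = 1 ∨ 2 ≤ |k| by omega) with hk | hk
  · obtain rfl : r = 0 := abs_eq_zero.1 (by omega)
    rw [add_zero] at hkr
    rcases eq_or_eq_neg_of_abs_eq hk with rfl | rfl
    · exact ⟨s + n, ht, s, hs, by simpa using hkr⟩
    · exact ⟨s, hs, s + n, ht, by rw [← neg_sub, hkr]; simp⟩
  · obtain ⟨s', hs', t', ht', hlt, hforce⟩ :=
      exists_isForcing_dist_lt (hz.shift ht) hk hrk hrd (by simpa using hkr)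
    refine ih _ ?_ (by omega) (by omega) hforce rfl
    rw [Nat.dist_add_add_left]
    unfold Nat.dist at hm hlt ⊢
    omega

end Descent

theorem stmt_2_general {d k r : ℤ} (hk : |r| < |k|) {l : ℕ} {z : ℕ → GaussianInt}
    (hstep : IsWalk l z)
    (hreal : ∃ s t, s ≤ l ∧ t ≤ l ∧ z s - z t = ((k * d + r : ℤ) : GaussianInt)) :
    ∃ u v, u ≤ l ∧ v ≤ l ∧ z u - z v = (d : GaussianInt) := by
  obtain ⟨s, t, hs, ht, hst⟩ := hreal
  rcases eq_or_ne d 0 with rfl | hd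
  · exact ⟨0, 0, by omega, by omega, by simp⟩
  · obtain ⟨u, hu, v, hv, huv⟩ := IsForcing.exists_sub_eq hd hstep ht hs ⟨k, r, hk, hst⟩
    exact ⟨u, v, hu, hv, huv⟩

/-- If n = k·d + r with k ≥ |r| + 1 then every unit-step walk of Gaussian integers
realizing the difference n realizes the difference d. -/
theorem stmt_2 (n d : ℤ) (hn : 0 < n) (hd : 0 < d)
    (k r : ℤ) (hkr : n = k * d + r) (hk : k ≥ |r| + 1)
    (l : ℕ) (z : ℕ → GaussianInt)
    (hstep : ∀ j < l, (z (j + 1) - z j).norm = 1)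
    (hreal : ∃ s t, s ≤ l ∧ t ≤ l ∧ z s - z t = (n : GaussianInt)) :
    ∃ u v, u ≤ l ∧ v ≤ l ∧ z u - z v = (d : GaussianInt) := by
  exact stmt_2_general ((Int.lt_of_add_one_le hk).trans_le (le_abs_self k)) hstep (hkr ▸ hreal)
end

section
/- Let n, d be positive integers and write n = k(n,d)·d + r(n,d) with r(n,d) the unique integer in [-⌊d/2⌋, ⌈d/2⌉-1]. If k(n,d) ≤ |r(n,d)|, then there exists a finite sequence z₀, z₁, …, z_l of Gaussian integers with |z_{j+1} - z_j| = 1 for all j, with z_s - z_t = n for some indices s, t, and with z_u - z_v ≠ d for all indices u, v. -/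
/-!
Let `g : ℤ → ℤ` vary by at most `W` between consecutive integers. The points of `ℤ[i]` at height
between `0` and `W` above the graph of `g` form a connected strip, and if moreover `g` drops by more
than `W` over each period `d`, then no two points of the strip differ by `d`. It remains to find
such a `g` whose strip contains `0` and `n`. We take
`g x = (2 * (n - d) + 1) * dist(x, dℤ) - 2 * |r| * x` and `W = 2 * |r| * d - 1`: the periodic term
has the distance `|r|` from `n` to `dℤ` in which to compensate the drift, and `k ≤ |r|` is what
keeps the required slope within `W`. The factors `2` make room for working with integer heights.
-/

/-- Some finite walk in `ℤ[i]` has two terms with difference `a` but no two terms with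
difference `b`. The walk consists of the terms of `z` with index at most `l`. -/
def RealizableAvoiding (a b : GaussianInt) : Prop :=
  ∃ (l : ℕ) (z : ℕ → GaussianInt),
    (∀ j < l, (z (j + 1) - z j).norm = 1) ∧
    (∃ s t, s ≤ l ∧ t ≤ l ∧ z s - z t = a) ∧
    (∀ u v, u ≤ l → v ≤ l → z u - z v ≠ b)

/-- The graph on `ℤ[i]` whose walks are the sequences of unit steps. -/
def gaussianGrid : SimpleGraph GaussianInt where
  Adj z w := (w - z).norm = 1
  symm := ⟨fun z w h => by rwa [← Zsqrtd.norm_neg, neg_sub]⟩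
  loopless := ⟨fun z => by simp⟩

theorem exists_walk_mem_of_preconnected {S : Set GaussianInt}
    (hS : (gaussianGrid.induce S).Preconnected) {a b : GaussianInt} (ha : a ∈ S) (hb : b ∈ S) :
    ∃ (l : ℕ) (z : ℕ → GaussianInt), (∀ j < l, (z (j + 1) - z j).norm = 1) ∧
      z 0 = a ∧ z l = b ∧ ∀ j, z j ∈ S := by
  obtain ⟨p⟩ := hS ⟨a, ha⟩ ⟨b, hb⟩
  exact ⟨p.length, fun j => p.getVert j, fun j hj => p.adj_getVert_succ hj,
    congrArg Subtype.val p.getVert_zero, congrArg Subtype.val p.getVert_length,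
    fun j => (p.getVert j).2⟩

/-- The set of Gaussian integers at height between `0` and `W` above the graph of `g`, in which the
walks are constructed. -/
def graphStrip (g : ℤ → ℤ) (W : ℤ) : Set GaussianInt :=
  {z | g z.re ≤ z.im ∧ z.im ≤ g z.re + W}

section graphStrip

variable {g : ℤ → ℤ} {W : ℤ}

theorem reachable_graphStrip_of_le {x y y' : ℤ} (hyy' : y ≤ y')
    (hy : ⟨x, y⟩ ∈ graphStrip g W) (hy' : ⟨x, y'⟩ ∈ graphStrip g W) :
    (gaussianGrid.induce (graphStrip g W)).Reachable ⟨⟨x, y⟩, hy⟩ ⟨⟨x, y'⟩, hy'⟩ := by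
  induction y', hyy' using Int.leInduction with
  | base => exact .rfl
  | succ t hyt ih =>
    have ht : ⟨x, t⟩ ∈ graphStrip g W := ⟨hy.1.trans hyt, (Int.le_add_one le_rfl).trans hy'.2⟩
    refine (ih ht).trans (SimpleGraph.Adj.reachable ?_)
    simp [gaussianGrid, Zsqrtd.norm_def]

theorem reachable_graphStrip_succ {x : ℤ} (hx : |g (x + 1) - g x| ≤ W)
    (h : ⟨x, g x⟩ ∈ graphStrip g W) (h' : ⟨x + 1, g (x + 1)⟩ ∈ graphStrip g W) :
    (gaussianGrid.induce (graphStrip g W)).Reachable ⟨⟨x, g x⟩, h⟩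
      ⟨⟨x + 1, g (x + 1)⟩, h'⟩ := by
  set t := max (g x) (g (x + 1))
  have hxW := abs_le.mp hx
  have left_mem : ⟨x, t⟩ ∈ graphStrip g W := show g x ≤ t ∧ t ≤ g x + W by omega
  have right_mem : ⟨x + 1, t⟩ ∈ graphStrip g W :=
    show g (x + 1) ≤ t ∧ t ≤ g (x + 1) + W by omega
  have cross : (gaussianGrid.induce (graphStrip g W)).Adj
      ⟨⟨x, t⟩, left_mem⟩ ⟨⟨x + 1, t⟩, right_mem⟩ := by
    simp [gaussianGrid, Zsqrtd.norm_def]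
  exact (reachable_graphStrip_of_le (le_max_left _ _) h left_mem).trans
    (cross.reachable.trans (reachable_graphStrip_of_le (le_max_right _ _) h' right_mem).symm)

theorem preconnected_graphStrip (hg : ∀ x, |g (x + 1) - g x| ≤ W) :
    (gaussianGrid.induce (graphStrip g W)).Preconnected := by
  have hW : 0 ≤ W := (abs_nonneg _).trans (hg 0)
  have graph_mem (x : ℤ) : ⟨x, g x⟩ ∈ graphStrip g W := ⟨le_rfl, le_add_of_nonneg_right hW⟩
  have reachable_graph (x : ℤ) : (gaussianGrid.induce (graphStrip g W)).Reachable
      ⟨_, graph_mem 0⟩ ⟨_, graph_mem x⟩ := by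
    induction x with
    | zero => exact .rfl
    | succ i ih => exact ih.trans (reachable_graphStrip_succ (hg i) _ _)
    | pred i ih =>
      refine ih.trans (SimpleGraph.Reachable.symm ?_)
      simpa only [sub_add_cancel] using
        reachable_graphStrip_succ (hg (-i - 1)) (graph_mem _) (graph_mem _)
  have reachable_all (z : graphStrip g W) : (gaussianGrid.induce (graphStrip g W)).Reachable
      ⟨_, graph_mem 0⟩ z :=
    (reachable_graph z.1.re).trans (reachable_graphStrip_of_le z.2.1 (graph_mem _) z.2)
  exact fun z w => (reachable_all z).symm.trans (reachable_all w)

theorem sub_ne_intCast_of_mem_graphStrip {d : ℤ} (hd : ∀ x, g (x + d) + W < g x)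
    {z w : GaussianInt} (hz : z ∈ graphStrip g W) (hw : w ∈ graphStrip g W) :
    z - w ≠ (d : GaussianInt) := by
  intro hzw
  obtain rfl : z = w + d := sub_eq_iff_eq_add'.mp hzw
  have upper : w.im ≤ g (w.re + d) + W := by simpa using hz.2
  exact (hw.1.trans upper).not_gt (hd w.re)

theorem realizableAvoiding_of_mem_graphStrip {d : ℤ} (hg : ∀ x, |g (x + 1) - g x| ≤ W)
    (hd : ∀ x, g (x + d) + W < g x) {a b : GaussianInt} (ha : a ∈ graphStrip g W)
    (hb : b ∈ graphStrip g W) : RealizableAvoiding (b - a) d := by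
  obtain ⟨l, z, hstep, hz0, hzl, hz⟩ :=
    exists_walk_mem_of_preconnected (preconnected_graphStrip hg) ha hb
  exact ⟨l, z, hstep, ⟨l, 0, le_rfl, l.zero_le, by rw [hzl, hz0]⟩,
    fun u v _ _ => sub_ne_intCast_of_mem_graphStrip hd (hz u) (hz v)⟩

end graphStrip

section Sawtooth

variable {d : ℕ}

theorem natAbs_valMinAbs_intCast_le (r : ℤ) : (r : ZMod d).valMinAbs.natAbs ≤ r.natAbs := by
  rcases eq_zero_or_neZero d with rfl | _
  · exact (congrArg Int.natAbs Int.cast_id).le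
  · exact ZMod.natAbs_min_of_le_div_two d _ r (ZMod.coe_valMinAbs _) (ZMod.natAbs_valMinAbs_le _)

theorem abs_valMinAbs_intCast {r : ℤ} (hr : 2 * |r| ≤ d) : |(r : ZMod d).valMinAbs| = |r| := by
  rw [Int.abs_eq_natAbs] at hr
  rw [Int.abs_eq_natAbs, Int.abs_eq_natAbs, Nat.cast_inj]
  exact (natAbs_valMinAbs_intCast_le r).antisymm <|
    ZMod.natAbs_min_of_le_div_two d r _ (ZMod.coe_valMinAbs _).symm (by omega)

theorem abs_abs_valMinAbs_add_one_sub_le (a : ZMod d) :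
    |(|(a + 1).valMinAbs| - |a.valMinAbs|)| ≤ 1 := by
  have one_le : (1 : ZMod d).valMinAbs.natAbs ≤ 1 := by
    simpa using natAbs_valMinAbs_intCast_le (d := d) 1
  have up := ZMod.natAbs_valMinAbs_add_le a 1
  have down := ZMod.natAbs_valMinAbs_add_le (a + 1) (-1)
  rw [add_neg_cancel_right] at down
  have neg_one := ZMod.natAbs_valMinAbs_neg (1 : ZMod d)
  simp only [Int.abs_eq_natAbs]
  omega

/-- The function `b * dist(x, dℤ) - c * x`, a triangle wave of period `d` with a linear drift. The
distance from `x` to `dℤ` is encoded as the absolute value of the representative of `x` modulo `d`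
closest to `0`. -/
def sawtooth (d : ℕ) (b c x : ℤ) : ℤ :=
  b * |(x : ZMod d).valMinAbs| - c * x

theorem sawtooth_add_self (b c x : ℤ) : sawtooth d b c (x + d) = sawtooth d b c x - c * d := by
  simp only [sawtooth, Int.cast_add, Int.cast_natCast, ZMod.natCast_self, add_zero]
  ring

theorem abs_sawtooth_succ_sub_le (b c x : ℤ) :
    |sawtooth d b c (x + 1) - sawtooth d b c x| ≤ |b| + |c| :=
  calc |sawtooth d b c (x + 1) - sawtooth d b c x|
      = |b * (|((x : ZMod d) + 1).valMinAbs| - |(x : ZMod d).valMinAbs|) - c| := by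
        simp only [sawtooth, Int.cast_add, Int.cast_one]; ring_nf
    _ ≤ |b| * |(|((x : ZMod d) + 1).valMinAbs| - |(x : ZMod d).valMinAbs|)| + |c| := by
        rw [← abs_mul]; exact abs_sub _ _
    _ ≤ |b| + |c| := by
        gcongr
        exact mul_le_of_le_one_right (abs_nonneg b) (abs_abs_valMinAbs_add_one_sub_le _)

theorem sawtooth_mul_add (b c k : ℤ) {r : ℤ} (hr : 2 * |r| ≤ d) :
    sawtooth d b c (k * d + r) = b * |r| - c * (k * d + r) := by
  simp [sawtooth, abs_valMinAbs_intCast hr]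

end Sawtooth

theorem realizableAvoiding_of_sawtooth {d : ℕ} {b c W n : ℤ} (hbc : |b| + |c| ≤ W) (hW : W < c * d)
    (hn : sawtooth d b c n ∈ Set.Icc (-W) 0) :
    RealizableAvoiding (n : GaussianInt) ((d : ℤ) : GaussianInt) := by
  have zero_mem : 0 ∈ graphStrip (sawtooth d b c) W := by
    simpa [graphStrip, sawtooth] using (add_nonneg (abs_nonneg b) (abs_nonneg c)).trans hbc
  have n_mem : (n : GaussianInt) ∈ graphStrip (sawtooth d b c) W := by
    simpa [graphStrip, and_comm, neg_le_iff_add_nonneg] using hn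
  have drop (x : ℤ) : sawtooth d b c (x + d) + W < sawtooth d b c x := by
    rw [sawtooth_add_self]; linarith
  simpa only [sub_zero] using realizableAvoiding_of_mem_graphStrip
    (fun x => (abs_sawtooth_succ_sub_le b c x).trans hbc) drop zero_mem n_mem

theorem abs_slope_add_abs_drift_le {n d k r : ℤ} (hn : 0 < n) (hd : 0 < d) (hkr : n = k * d + r)
    (hk : k ≤ |r|) (hr : 1 ≤ |r|) (hrd : |r| + r < d) :
    |2 * (n - d) + 1| + |(2 * |r|)| ≤ 2 * |r| * d - 1 := by
  have mul_le : k * d ≤ |r| * d := by gcongr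
  have add_le : |r| + d ≤ |r| * d + 1 := by nlinarith only [hr, hd]
  rw [abs_of_pos (by positivity : 0 < 2 * |r|), ← le_sub_iff_add_le, abs_le]
  constructor <;> linarith

/-- If k(n,d) ≤ |r(n,d)| then there is a unit-step walk realizing the difference n
and avoiding the difference d. -/
theorem stmt_3 (n d : ℤ) (hn : 0 < n) (hd : 0 < d)
    (k r : ℤ) (hkr : n = k * d + r)
    (hr1 : -(d / 2) ≤ r) (hr2 : r ≤ (d + 1) / 2 - 1)
    (hk : k ≤ |r|) :
    ∃ (l : ℕ) (z : ℕ → GaussianInt),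
      (∀ j < l, (z (j + 1) - z j).norm = 1) ∧
      (∃ s t, s ≤ l ∧ t ≤ l ∧ z s - z t = (n : GaussianInt)) ∧
      (∀ u v, u ≤ l → v ≤ l → z u - z v ≠ (d : GaussianInt)) := by
  lift d to ℕ using hd.le
  have r_ne_zero : r ≠ 0 := by
    rintro rfl
    have : k * d ≤ 0 := mul_nonpos_of_nonpos_of_nonneg (by simpa using hk) hd.le
    omega
  have one_le_abs : 1 ≤ |r| := Int.one_le_abs r_ne_zero
  have two_abs_le : 2 * |r| ≤ d := by rw [Int.abs_eq_natAbs]; omega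
  have abs_add_lt : |r| + r < d := by rw [Int.abs_eq_natAbs]; omega
  have value_at_n : sawtooth d (2 * (n - d) + 1) (2 * |r|) n = |r| - 2 * |r| * d := by
    rw [hkr, sawtooth_mul_add _ _ _ two_abs_le]
    ring
  have abs_le_abs_mul : |r| ≤ |r| * d := le_mul_of_one_le_right (abs_nonneg r) hd
  refine realizableAvoiding_of_sawtooth
    (abs_slope_add_abs_drift_le hn hd hkr hk one_le_abs abs_add_lt) (sub_one_lt _) ?_
  rw [value_at_n]
  constructor <;> linarith
end

section
/- Let n, d be positive integers and define A_n as the set of positive integers d such that every finite unit-step walk of Gaussian integers containing two terms differing by n also contains two terms differing by d. Then d ∈ A_n if and only if k(n,d) ≥ |r(n,d)| + 1, where n = k(n,d)·d + r(n,d) with r(n,d) ∈ [-⌊d/2⌋, ⌈d/2⌉-1]. -/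
/-!
Let `S` be the set of points of a walk. If the differences `a` and `b` do not occur in `S`, then
the translates `S - a` and `S + b` miss `S`, so neither of them crosses a walk `W` inside `S` from
a highest to a lowest point of `S`; judging from its highest point, `S - a` lies to the left of
`W` and `S + b` to the right. If the difference `a + b + e` occurred, say `p = q + a + b + e`,
then `p - a` and `q + b` would lie on different sides of `W`, which is absurd for `|e| ≤ 1`, since
these points are then equal or neighbours in the same row. Starting from `d` itself, this makes
`d` unavoidable for `n = k * d + r` as soon as `|r| ≤ k - 1`.

Otherwise `K * (d + 1) ≤ n ≤ (K + 1) * (d - 1)` for some `K ≥ 0`. A walk that moves right in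
single steps at varying heights avoids `d` if its part over column `x + d` always lies strictly
below its part over column `x`. For this it is enough that the heights decrease whenever the
abscissa grows by `d - 1`, `d` or `d + 1`, up to conditions at both ends of the walk, and heights
with this property are read off from `x / (d + 1)` and `x / (d - 1)`, of which such a jump
increases the first by at most one and the second by at least one.
-/

section UnitStepWalks

open Zsqrtd
open scoped Pointwise

/-- The graph joining two points of `S` at distance one; points outside `S` are isolated. -/
def unitStepGraph (S : Set GaussianInt) : SimpleGraph GaussianInt where
  Adj p q := p ∈ S ∧ q ∈ S ∧ (q - p).norm = 1
  symm := ⟨fun p q ⟨hp, hq, hpq⟩ => ⟨hq, hp, by rwa [← neg_sub, norm_neg]⟩⟩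
  loopless := ⟨fun p ⟨_, _, hp⟩ => by simp at hp⟩

/-- A set any two points of which are joined by a unit-step walk inside it. -/
def IsStepConnected (S : Set GaussianInt) : Prop :=
  ∀ ⦃p⦄, p ∈ S → ∀ ⦃q⦄, q ∈ S → (unitStepGraph S).Reachable p q

variable {S A B : Set GaussianInt} {p q u v : GaussianInt}

lemma unitStepGraph_mono (h : A ⊆ B) : unitStepGraph A ≤ unitStepGraph B :=
  fun _ _ ⟨hp, hq, hpq⟩ => ⟨h hp, h hq, hpq⟩

lemma mem_of_mem_support (hu : u ∈ S) (W : (unitStepGraph S).Walk u v) :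
    ∀ w ∈ W.support, w ∈ S := by
  induction W with
  | nil => simpa using hu
  | cons h W ih => simpa using ⟨hu, ih h.2.1⟩

lemma eq_add_unit_of_norm_sub_eq_one (h : (q - p).norm = 1) :
    q = p + 1 ∨ p = q + 1 ∨ q = p + sqrtd ∨ p = q + sqrtd := by
  have norm_eq : (q.re - p.re) ^ 2 + (q.im - p.im) ^ 2 = 1 := by
    rw [norm_def, re_sub, im_sub] at h
    linarith
  have re_bounds : -1 ≤ q.re - p.re ∧ q.re - p.re ≤ 1 := by constructor <;> nlinarith
  have im_bounds : -1 ≤ q.im - p.im ∧ q.im - p.im ≤ 1 := by constructor <;> nlinarith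
  simp only [Zsqrtd.ext_iff, re_add, im_add, re_one, im_one, re_sqrtd, im_sqrtd]
  generalize hx : q.re - p.re = x at *
  generalize hy : q.im - p.im = y at *
  obtain ⟨hx₁, hx₂⟩ := re_bounds
  obtain ⟨hy₁, hy₂⟩ := im_bounds
  interval_cases x <;> interval_cases y <;> omega

lemma isStepConnected_image_Iic {l : ℕ} {z : ℕ → GaussianInt}
    (hz : ∀ j < l, (z (j + 1) - z j).norm = 1) : IsStepConnected (z '' Set.Iic l) := by
  have from_start : ∀ j ≤ l, (unitStepGraph (z '' Set.Iic l)).Reachable (z 0) (z j) := by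
    intro j hj
    induction j with
    | zero => rfl
    | succ j ih =>
      refine (ih (by omega)).trans (SimpleGraph.Adj.reachable ⟨?_, ?_, hz j hj⟩)
      · exact Set.mem_image_of_mem z (Set.mem_Iic.2 (by omega))
      · exact Set.mem_image_of_mem z hj
  rintro _ ⟨i, hi, rfl⟩ _ ⟨j, hj, rfl⟩
  exact (from_start i hi).symm.trans (from_start j hj)

lemma exists_walk_of_reachable (hp : p ∈ S) (h : (unitStepGraph S).Reachable p q) :
    ∃ (l : ℕ) (z : ℕ → GaussianInt), z 0 = p ∧ z l = q ∧ (∀ j ≤ l, z j ∈ S) ∧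
      ∀ j < l, (z (j + 1) - z j).norm = 1 := by
  obtain ⟨W⟩ := h
  exact ⟨W.length, W.getVert, W.getVert_zero, W.getVert_length,
    fun j _ => mem_of_mem_support hp W _ (W.getVert_mem_support j),
    fun j hj => (W.adj_getVert_succ hj).2.2⟩

lemma IsStepConnected.image_add_right (hS : IsStepConnected S) (c : GaussianInt) :
    IsStepConnected ((· + c) '' S) := by
  rintro _ ⟨p, hp, rfl⟩ _ ⟨q, hq, rfl⟩
  refine (hS hp hq).map ⟨(· + c), ?_⟩
  rintro u v ⟨hu, hv, huv⟩
  exact ⟨Set.mem_image_of_mem _ hu, Set.mem_image_of_mem _ hv, by rwa [add_sub_add_right_eq_sub]⟩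

/-- The signed contribution of the step from `u` to `v` to the crossings of the ray that leaves
`p + i / 2` to the left: `1` for an upward crossing, `-1` for a downward one. -/
def stepCrossing (p u v : GaussianInt) : ℤ :=
  if u.re < p.re then (if p.im < v.im then 1 else 0) - (if p.im < u.im then 1 else 0) else 0

lemma stepCrossing_add_one (huv : (v - u).norm = 1) (hu : u ≠ p) (hv : v ≠ p) :
    stepCrossing (p + 1) u v = stepCrossing p u v := by
  simp only [stepCrossing, Ne, Zsqrtd.ext_iff] at hu hv ⊢
  rcases eq_add_unit_of_norm_sub_eq_one huv with rfl | rfl | rfl | rfl <;>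
    simp only [re_add, im_add, re_one, im_one, re_sqrtd, im_sqrtd] at hu hv ⊢ <;>
    split_ifs <;> omega

lemma stepCrossing_sub_add_sqrtd (huv : (v - u).norm = 1) (hu : u ≠ p + sqrtd)
    (hv : v ≠ p + sqrtd) :
    stepCrossing p u v - stepCrossing (p + sqrtd) u v =
      (if v.re < p.re ∧ v.im = p.im + 1 then 1 else 0) -
        (if u.re < p.re ∧ u.im = p.im + 1 then 1 else 0) := by
  simp only [stepCrossing, Ne, Zsqrtd.ext_iff] at hu hv ⊢
  rcases eq_add_unit_of_norm_sub_eq_one huv with rfl | rfl | rfl | rfl <;>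
    simp only [re_add, im_add, re_one, im_one, re_sqrtd, im_sqrtd] at hu hv ⊢ <;>
    split_ifs <;> omega

/-- The signed number of times a walk crosses the ray that leaves `p + i / 2` to the left. As for a
winding number, it tells on which side of the walk `p` lies. -/
def crossingNumber (W : (unitStepGraph A).Walk u v) (p : GaussianInt) : ℤ :=
  (W.darts.map fun e => stepCrossing p e.fst e.snd).sum

@[simp] lemma crossingNumber_nil : crossingNumber (.nil : (unitStepGraph A).Walk u u) p = 0 := rfl

@[simp] lemma crossingNumber_cons {w : GaussianInt} (h : (unitStepGraph A).Adj u v)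
    (W : (unitStepGraph A).Walk v w) :
    crossingNumber (.cons h W) p = stepCrossing p u v + crossingNumber W p := by
  simp [crossingNumber]

lemma crossingNumber_eq_zero (W : (unitStepGraph A).Walk u v)
    (hW : ∀ w ∈ W.support, w.im ≤ p.im) : crossingNumber W p = 0 := by
  refine List.sum_eq_zero fun n hn => ?_
  obtain ⟨e, he, rfl⟩ := List.mem_map.1 hn
  have hfst := hW _ (W.dart_fst_mem_support_of_mem_darts he)
  have hsnd := hW _ (W.dart_snd_mem_support_of_mem_darts he)
  simp [stepCrossing, hfst.not_gt, hsnd.not_gt]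

lemma crossingNumber_add_one (W : (unitStepGraph A).Walk u v) (hp : p ∉ A) :
    crossingNumber W (p + 1) = crossingNumber W p := by
  refine congrArg List.sum (List.map_congr_left fun e _ => ?_)
  obtain ⟨hu, hv, huv⟩ := e.adj
  exact stepCrossing_add_one huv (ne_of_mem_of_not_mem hu hp) (ne_of_mem_of_not_mem hv hp)

/-- Raising the ray changes the crossings step by step, but the changes telescope. -/
lemma crossingNumber_sub_add_sqrtd (W : (unitStepGraph A).Walk u v) (hp : p + sqrtd ∉ A) :
    crossingNumber W p - crossingNumber W (p + sqrtd) =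
      (if v.re < p.re ∧ v.im = p.im + 1 then 1 else 0) -
        (if u.re < p.re ∧ u.im = p.im + 1 then 1 else 0) := by
  induction W with
  | nil => simp
  | cons h W ih =>
    have step := stepCrossing_sub_add_sqrtd h.2.2 (ne_of_mem_of_not_mem h.1 hp)
      (ne_of_mem_of_not_mem h.2.1 hp)
    rw [crossingNumber_cons, crossingNumber_cons]
    linarith

lemma crossingNumber_add_sqrtd (W : (unitStepGraph A).Walk u v) (hp : p + sqrtd ∉ A)
    (hbot : v.im ≤ p.im) (htop : p.im + 1 < u.im) :
    crossingNumber W (p + sqrtd) = crossingNumber W p := by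
  have h := crossingNumber_sub_add_sqrtd W hp
  rw [if_neg (by omega), if_neg (by omega)] at h
  omega

lemma crossingNumber_eq_of_isStepConnected (W : (unitStepGraph A).Walk u v)
    (hB : IsStepConnected B) (hAB : Disjoint A B)
    (hheight : ∀ w ∈ B, v.im ≤ w.im ∧ w.im < u.im) (hp : p ∈ B) (hq : q ∈ B) :
    crossingNumber W p = crossingNumber W q := by
  obtain ⟨P⟩ := hB hp hq
  clear hp hq
  induction P with
  | nil => rfl
  | @cons p q r h P ih =>
    obtain ⟨hp, hq, hpq⟩ := h
    rw [← ih]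
    have hpA := hAB.notMem_of_mem_right hp
    have hqA := hAB.notMem_of_mem_right hq
    rcases eq_add_unit_of_norm_sub_eq_one hpq with rfl | rfl | rfl | rfl
    · exact (crossingNumber_add_one W hpA).symm
    · exact crossingNumber_add_one W hqA
    · exact (crossingNumber_add_sqrtd W hqA (hheight _ hp).1
        (by simpa using (hheight _ hq).2)).symm
    · exact crossingNumber_add_sqrtd W hpA (hheight _ hq).1 (by simpa using (hheight _ hp).2)

/-- The additional first step from `t + i` down to `t` makes the barrier start strictly above `S`,
so that points in the top row of `S` cannot pass around its upper end. -/
lemma exists_barrier (hfin : S.Finite) (hne : S.Nonempty) (hS : IsStepConnected S) :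
    ∃ t ∈ S, ∃ b, ∃ W : (unitStepGraph (insert (t + sqrtd) S)).Walk (t + sqrtd) b,
      (∀ p ∈ S, b.im ≤ p.im ∧ p.im ≤ t.im) ∧
        ∀ p : GaussianInt, p.im = t.im → crossingNumber W p = if t.re < p.re then -1 else 0 := by
  obtain ⟨t, ht, htop⟩ := Set.exists_max_image S Zsqrtd.im hfin hne
  obtain ⟨b, hb, hbot⟩ := Set.exists_min_image S Zsqrtd.im hfin hne
  obtain ⟨W⟩ := hS ht hb
  have first : (unitStepGraph (insert (t + sqrtd) S)).Adj (t + sqrtd) t :=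
    ⟨Set.mem_insert _ _, Set.mem_insert_of_mem _ ht, by simp [norm_def]⟩
  refine ⟨t, ht, b, .cons first (W.mapLe (unitStepGraph_mono (Set.subset_insert _ _))),
    fun p hp => ⟨hbot p hp, htop p hp⟩, fun p hp => ?_⟩
  rw [crossingNumber_cons, crossingNumber_eq_zero, add_zero]
  · simp [stepCrossing, hp]
  · rw [SimpleGraph.Walk.support_mapLe_eq_support, hp]
    exact fun w hw => htop w (mem_of_mem_support ht W w hw)

/-- A horizontal translate of `S` disjoint from `S` lies on one side of the barrier, and the
translate of the highest point tells on which: `side` is `0` on the left and `-1` on the right. -/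
lemma exists_side_function (hfin : S.Finite) (hne : S.Nonempty) (hS : IsStepConnected S) :
    ∃ side : GaussianInt → ℤ,
      (∀ p ∈ S, ∀ c : ℤ, p + c ∉ S → side (p + c + 1) = side (p + c)) ∧
      ∀ c : ℤ, (∀ p ∈ S, p + c ∉ S) → ∀ p ∈ S, side (p + c) = if 0 < c then -1 else 0 := by
  obtain ⟨t, ht, b, W, hheight, htop⟩ := exists_barrier hfin hne hS
  have notMem_barrier : ∀ p ∈ S, ∀ c : ℤ, p + c ∉ S → p + c ∉ insert (t + sqrtd) S := by
    rintro p hp c hpc (h | h)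
    · have him := congrArg Zsqrtd.im h
      simp only [im_add, im_intCast, im_sqrtd] at him
      linarith [(hheight p hp).2]
    · exact hpc h
  refine ⟨crossingNumber W, fun p hp c hpc => crossingNumber_add_one W (notMem_barrier p hp c hpc),
    fun c hc p hp => ?_⟩
  have const : crossingNumber W (p + c) = crossingNumber W (t + c) := by
    refine crossingNumber_eq_of_isStepConnected W (hS.image_add_right c) ?_ ?_
      (Set.mem_image_of_mem _ hp) (Set.mem_image_of_mem _ ht)
    · exact Set.disjoint_right.2 <| Set.forall_mem_image.2
        fun w hw => notMem_barrier w hw c (hc w hw)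
    · refine Set.forall_mem_image.2 fun w hw => ?_
      simpa [Int.lt_add_one_iff] using hheight w hw
  rw [const, htop _ (by simp)]
  simp

lemma mem_sub_or_mem_sub_of_add_mem_sub (hfin : S.Finite) (hS : IsStepConnected S) {a b e : ℤ}
    (ha : 0 < a) (hb : 0 < b) (he : |e| ≤ 1) (h : ((a + b + e : ℤ) : GaussianInt) ∈ S - S) :
    (a : GaussianInt) ∈ S - S ∨ (b : GaussianInt) ∈ S - S := by
  by_contra! ⟨hna, hnb⟩
  obtain ⟨p, hp, q, hq, hpq⟩ := h
  obtain ⟨side, side_add_one, side_translate⟩ := exists_side_function hfin ⟨p, hp⟩ hS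
  have hpa : ∀ w ∈ S, w + (-a : ℤ) ∉ S := fun w hw hwa => hna ⟨w, hw, _, hwa, by simp⟩
  have hqb : ∀ w ∈ S, w + b ∉ S := fun w hw hwb => hnb ⟨_, hwb, w, hw, by simp⟩
  have p_side : side (p + (-a : ℤ)) = 0 := by rw [side_translate _ hpa p hp, if_neg (by omega)]
  have q_side : side (q + b) = -1 := by rw [side_translate _ hqb q hq, if_pos hb]
  have hpq' : p + (-a : ℤ) = q + b + e := by
    rw [sub_eq_iff_eq_add.1 hpq]
    push_cast
    ring
  have same_side : side (p + (-a : ℤ)) = side (q + b) := by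
    obtain rfl | rfl | rfl : e = -1 ∨ e = 0 ∨ e = 1 := by
      rw [abs_le] at he
      omega
    · rw [← side_add_one p hp _ (hpa p hp), hpq']
      simp
    · rw [hpq', Int.cast_zero, add_zero]
    · rw [← side_add_one q hq _ (hqb q hq), hpq', Int.cast_one]
  omega

lemma exists_abs_sub_le_of_abs_le_add_one {k r : ℤ} (hk : 0 ≤ k) (hr : |r| ≤ k + 1) :
    ∃ e, |e| ≤ 1 ∧ |r - e| ≤ k := by
  simp only [abs_le] at hr ⊢
  rcases lt_trichotomy r 0 with h | h | h
  · exact ⟨-1, by omega⟩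
  · exact ⟨0, by omega⟩
  · exact ⟨1, by omega⟩

lemma mem_sub_of_mul_add_mem_sub (hfin : S.Finite) (hS : IsStepConnected S) {d k r : ℤ}
    (hd : 0 < d) (hkr : |r| + 1 ≤ k) (h : ((k * d + r : ℤ) : GaussianInt) ∈ S - S) :
    (d : GaussianInt) ∈ S - S := by
  have one_le : 1 ≤ k := by linarith [abs_nonneg r]
  induction k, one_le using Int.leInduction generalizing r with
  | base =>
    obtain rfl : r = 0 := by simpa using hkr
    simpa using h
  | succ k one_le ih =>
    obtain ⟨e, he, hre⟩ := exists_abs_sub_le_of_abs_le_add_one (k := k - 1) (r := r)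
      (by omega) (by omega)
    have pos : 0 < k * d + (r - e) := by nlinarith [neg_le_of_abs_le hre]
    have split : (k + 1) * d + r = d + (k * d + (r - e)) + e := by ring
    rw [split] at h
    exact (mem_sub_or_mem_sub_of_add_mem_sub hfin hS hd pos he h).elim id (ih (by omega))

/-- The height of the step from abscissa `x` to `x + 1` in a battlement-shaped walk. In the range
`0 ≤ x < (K + 1) * (d - 1)`, and for `2 * K < d`, plateaus `j * (d + 1) ≤ x < (j + 1) * (d - 1)` of
height `K - j` alternate with valleys `j * (d - 1) ≤ x < j * (d + 1)` of height `-j`. -/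
def battlementHeight (d K x : ℤ) : ℤ :=
  if x / (d + 1) = x / (d - 1) then K - x / (d + 1) else -(x / (d - 1))

lemma battlementHeight_lt {d K x y : ℤ} (hd : 1 < d) (hK : 0 ≤ K) (hx : 0 ≤ x)
    (hxy : d - 1 ≤ y - x) (hyx : y - x ≤ d + 1) :
    battlementHeight d K y < battlementHeight d K x := by
  have le_div : x / (d + 1) ≤ x / (d - 1) :=
    Int.le_ediv_of_mul_le (by omega) <| by
      linarith [Int.ediv_mul_le x (show d + 1 ≠ 0 by omega),
        Int.ediv_nonneg hx (show 0 ≤ d + 1 by omega)]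
  have div_lt_add_two : y / (d + 1) < x / (d + 1) + 2 :=
    Int.ediv_lt_of_lt_mul (by omega) <| by
      linarith [Int.lt_ediv_add_one_mul_self x (show 0 < d + 1 by omega)]
  have succ_le_div : x / (d - 1) + 1 ≤ y / (d - 1) :=
    Int.le_ediv_of_mul_le (by omega) <| by
      linarith [Int.ediv_mul_le x (show d - 1 ≠ 0 by omega)]
  unfold battlementHeight
  split_ifs <;> omega

lemma battlementHeight_of_plateau {d K j x : ℤ} (hd : 1 < d) (hj : 0 ≤ j) (hx : j * (d + 1) ≤ x)
    (hx' : x < (j + 1) * (d - 1)) : battlementHeight d K x = K - j := by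
  have div_add : x / (d + 1) = j := (Int.ediv_eq_iff_of_pos (by omega)).2 ⟨hx, by nlinarith⟩
  have div_sub : x / (d - 1) = j :=
    (Int.ediv_eq_iff_of_pos (by omega)).2 ⟨by nlinarith, by nlinarith⟩
  rw [battlementHeight, div_add, div_sub, if_pos rfl]

lemma battlementHeight_le_of_valley {d K j x : ℤ} (hd : 1 < d) (hx : j * (d - 1) ≤ x)
    (hx' : x < j * (d + 1)) : battlementHeight d K x ≤ -j := by
  have div_add : x / (d + 1) < j := Int.ediv_lt_of_lt_mul (by omega) hx'
  have div_sub : j ≤ x / (d - 1) := (Int.le_ediv_iff_mul_le (by omega)).2 hx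
  rw [battlementHeight, if_neg (by omega)]
  omega

/-- The points met by the walk over the columns `0, …, n` that enters column `x` at height `g x` and
leaves it, to the right, at height `g (x + 1)`. -/
def skyline (n : ℤ) (g : ℤ → ℤ) : Set GaussianInt :=
  {p | p.re ∈ Set.Icc 0 n ∧ p.im ∈ Set.uIcc (g p.re) (g (p.re + 1))}

lemma reachable_vertical {x a b : ℤ} (h : ∀ y ∈ Set.uIcc a b, (⟨x, y⟩ : GaussianInt) ∈ S) :
    (unitStepGraph S).Reachable ⟨x, a⟩ ⟨x, b⟩ := by
  wlog hab : a ≤ b generalizing a b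
  · exact (this (by rwa [Set.uIcc_comm]) (by omega)).symm
  rw [Set.uIcc_of_le hab] at h
  induction b, hab using Int.leInduction with
  | base => rfl
  | succ b hab ih =>
    refine (ih fun y hy => h y ⟨hy.1, hy.2.trans (by omega)⟩).trans
      (SimpleGraph.Adj.reachable ⟨h b ⟨hab, by omega⟩, h _ ⟨by omega, le_rfl⟩, ?_⟩)
    simp [norm_def]

lemma reachable_skyline {n x : ℤ} (g : ℤ → ℤ) (hx : 0 ≤ x) (hxn : x ≤ n) :
    (unitStepGraph (skyline n g)).Reachable ⟨0, g 0⟩ ⟨x, g (x + 1)⟩ := by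
  have column : ∀ x, 0 ≤ x → x ≤ n →
      (unitStepGraph (skyline n g)).Reachable ⟨x, g x⟩ ⟨x, g (x + 1)⟩ :=
    fun x hx hxn => reachable_vertical fun y hy => ⟨⟨hx, hxn⟩, hy⟩
  induction x, hx using Int.leInduction with
  | base => exact column 0 le_rfl hxn
  | succ x hx ih =>
    refine (ih (by omega)).trans (.trans ?_ (column (x + 1) (by omega) hxn))
    refine SimpleGraph.Adj.reachable ⟨⟨⟨hx, ?_⟩, Set.right_mem_uIcc⟩,
      ⟨⟨?_, hxn⟩, Set.left_mem_uIcc⟩, by simp [norm_def]⟩ <;> simp only <;> omega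

lemma intCast_notMem_skyline_sub {n d : ℤ} {g : ℤ → ℤ}
    (hg : ∀ x, 0 ≤ x → x + d ≤ n → ∀ y ∈ Set.Icc x (x + 1),
      ∀ y' ∈ Set.Icc (x + d) (x + d + 1), g y' < g y) :
    (d : GaussianInt) ∉ skyline n g - skyline n g := by
  rintro ⟨q, ⟨hqn, hq⟩, p, ⟨hpn, hp⟩, hqp⟩
  obtain ⟨hre, him⟩ : q.re = p.re + d ∧ q.im = p.im := by
    rw [sub_eq_iff_eq_add.1 hqp]
    simp [add_comm]
  rw [hre] at hqn hq
  have lower : ∀ y ∈ Set.Icc p.re (p.re + 1), ∀ y' ∈ Set.Icc (p.re + d) (p.re + d + 1),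
      g y' < g y := hg p.re hpn.1 hqn.2
  have below : q.im < p.im := by
    refine lt_of_le_of_lt hq.2 (lt_of_lt_of_le ?_ hp.1)
    simp only [sup_lt_iff, lt_inf_iff]
    refine ⟨⟨?_, ?_⟩, ?_, ?_⟩ <;> apply lower <;> simp
  omega

/-- The height at which the battlement-shaped walk from `0` to `n` enters column `x`. It starts and
ends at height `0`, which is recorded as entering columns `0` and `n + 1` at that height. -/
def battlementEntry (n d K x : ℤ) : ℤ :=
  if 0 < x ∧ x ≤ n then battlementHeight d K (x - 1) else 0

lemma battlementEntry_lt {n d K x y y' : ℤ} (hd : 1 < d) (hK : 0 ≤ K) (hKn : K * (d + 1) ≤ n)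
    (hnK : n ≤ (K + 1) * (d - 1)) (hx : 0 ≤ x) (hxn : x + d ≤ n) (hy : y ∈ Set.Icc x (x + 1))
    (hy' : y' ∈ Set.Icc (x + d) (x + d + 1)) :
    battlementEntry n d K y' < battlementEntry n d K y := by
  obtain ⟨⟨hy₁, hy₂⟩, hy'₁, hy'₂⟩ := And.intro hy hy'
  have one_le : 1 ≤ K := by
    by_contra! hK'
    obtain rfl : K = 0 := by omega
    omega
  have d_lt : d < n := by nlinarith
  unfold battlementEntry
  rcases (hx.trans hy₁).eq_or_lt with rfl | y_pos
  · have valley : battlementHeight d K (y' - 1) ≤ -1 :=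
      battlementHeight_le_of_valley hd (by omega) (by omega)
    rw [if_pos (by omega), if_neg (by omega)]
    omega
  rcases le_or_gt y' n with y'_le | lt_y'
  · rw [if_pos (by omega), if_pos (by omega)]
    exact battlementHeight_lt hd hK (by omega) (by omega) (by omega)
  · have plateau : battlementHeight d K (y - 1) = K - (K - 1) :=
      battlementHeight_of_plateau hd (by omega) (by linarith) (by linarith)
    rw [if_neg (by omega), if_pos (by omega)]
    omega

lemma exists_reachable_and_notMem_sub {n d K : ℤ} (hn : 0 < n) (hK : 0 ≤ K)
    (hKn : K * (d + 1) ≤ n) (hnK : n ≤ (K + 1) * (d - 1)) :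
    ∃ S : Set GaussianInt, 0 ∈ S ∧ (unitStepGraph S).Reachable 0 n ∧ (d : GaussianInt) ∉ S - S := by
  have hd : 1 < d := by
    by_contra! hd
    nlinarith
  have entry_start : battlementEntry n d K 0 = 0 := if_neg (by omega)
  have entry_end : battlementEntry n d K (n + 1) = 0 := if_neg (by omega)
  refine ⟨skyline n (battlementEntry n d K), ⟨by simpa using hn.le, ?_⟩, ?_,
    intCast_notMem_skyline_sub fun x hx hxn y hy y' hy' =>
      battlementEntry_lt hd hK hKn hnK hx hxn hy hy'⟩
  · simp [entry_start]
  · convert reachable_skyline (battlementEntry n d K) hn.le le_rfl using 1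
    · simp [Zsqrtd.ext_iff, entry_start]
    · simp [Zsqrtd.ext_iff, entry_end]

lemma exists_mul_add_one_le_and_le_mul_sub_one {n d k r : ℤ} (hn : 0 < n)
    (hd : 0 < d) (hnk : n = k * d + r) (hr : -(d / 2) ≤ r) (hr' : r ≤ (d + 1) / 2 - 1)
    (hk : k ≤ |r|) : ∃ K, 0 ≤ K ∧ K * (d + 1) ≤ n ∧ n ≤ (K + 1) * (d - 1) := by
  rcases le_or_gt 0 r with hr₀ | hr₀
  · rw [abs_of_nonneg hr₀] at hk
    have k_nonneg : 0 ≤ k := by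
      by_contra! hneg
      nlinarith [show r < d by omega]
    exact ⟨k, k_nonneg, by linarith, by linarith [show k + r ≤ d - 1 by omega]⟩
  · rw [abs_of_neg hr₀] at hk
    have k_pos : 0 < k := by
      by_contra! hneg
      nlinarith
    exact ⟨k - 1, by omega, by linarith [show k - 1 ≤ r + d by omega], by linarith⟩

lemma exists_eq_mul_add_centered (n : ℤ) {d : ℤ} (hd : 0 < d) :
    ∃ k r, n = k * d + r ∧ -(d / 2) ≤ r ∧ r ≤ (d + 1) / 2 - 1 := by
  lift d to ℕ using hd.le
  have hd' : 0 < d := by exact_mod_cast hd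
  exact ⟨n.bdiv d, n.bmod d, (Int.bdiv_add_bmod' n d).symm, Int.le_bmod hd',
    Int.le_sub_one_of_lt (Int.bmod_lt hd')⟩

lemma mem_image_Iic_sub_image_Iic_iff {l : ℕ} {z : ℕ → GaussianInt} :
    u ∈ z '' Set.Iic l - z '' Set.Iic l ↔ ∃ s t, s ≤ l ∧ t ≤ l ∧ z s - z t = u := by
  simp only [Set.mem_sub, Set.exists_mem_image, Set.mem_Iic]
  grind

end UnitStepWalks

/-- Main theorem: d ∈ A_n iff k(n,d) ≥ |r(n,d)| + 1. -/
theorem stmt_4 (n d : ℤ) (hn : 0 < n) (hd : 0 < d) :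
    (∀ (l : ℕ) (z : ℕ → GaussianInt),
        (∀ j < l, (z (j + 1) - z j).norm = 1) →
        (∃ s t, s ≤ l ∧ t ≤ l ∧ z s - z t = (n : GaussianInt)) →
        ∃ u v, u ≤ l ∧ v ≤ l ∧ z u - z v = (d : GaussianInt)) ↔
    (∀ k r : ℤ, n = k * d + r → -(d / 2) ≤ r → r ≤ (d + 1) / 2 - 1 →
        k ≥ |r| + 1) := by
  constructor
  · intro unavoidable k r hnk hr hr'
    by_contra! hk
    obtain ⟨K, hK, hKn, hnK⟩ := exists_mul_add_one_le_and_le_mul_sub_one hn hd hnk hr hr' (by omega)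
    obtain ⟨S, hS₀, hSn, hSd⟩ := exists_reachable_and_notMem_sub hn hK hKn hnK
    obtain ⟨l, z, hz₀, hzl, hzS, hz⟩ := exists_walk_of_reachable hS₀ hSn
    obtain ⟨u, v, hu, hv, huv⟩ := unavoidable l z hz ⟨l, 0, le_rfl, l.zero_le, by simp [hz₀, hzl]⟩
    exact hSd ⟨z u, hzS u hu, z v, hzS v hv, huv⟩
  · intro centered l z hz hzn
    obtain ⟨k, r, hnk, hr, hr'⟩ := exists_eq_mul_add_centered n hd
    rw [← mem_image_Iic_sub_image_Iic_iff, hnk] at hzn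
    exact mem_image_Iic_sub_image_Iic_iff.1 <| mem_sub_of_mul_add_mem_sub
      ((Set.finite_Iic l).image z) (isStepConnected_image_Iic hz) hd (centered k r hnk hr hr') hzn
end

section
/- Let n and k be positive integers with k < (n+1)/(√(2n)+1) and k ∤ n. Then there exist exactly two integers r with -(k-1) ≤ r ≤ k-1 and k | (n - r); moreover, for each such r, the integer d = (n-r)/k satisfies d > √(2n) and |r| ≤ (d-1)/2. -/
/-!
The integers `r` with `|r| < k` and `r ≡ n [ZMOD k]` are `n % k` and, when `k ∤ n`, also
`n % k - k`. With `s = √(2n)`, the hypothesis `k (s + 1) < n + 1` says that `k s < n - (k - 1)`,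
and `n - (k - 1) ≤ n - r`, so `s < d` for `d = (n - r) / k`. Since `n = s² / 2`, it also gives
`2 k < (s² + 2) / (s + 1) ≤ s + 1`, as `s ≥ 1 / 2`, and therefore
`2 |r| ≤ 2 (k - 1) < s - 1 < d - 1`.
-/

theorem dvd_sub_iff_eq_emod_or_of_abs_lt {n k r : ℤ} (hr : |r| < k) :
    k ∣ n - r ↔ r = n % k ∨ r = n % k - k := by
  obtain ⟨hneg, hlt⟩ := abs_lt.mp hr
  have hk : 0 < k := (abs_nonneg r).trans_lt hr
  have hmod_nonneg : 0 ≤ n % k := Int.emod_nonneg n hk.ne'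
  rw [← Int.modEq_iff_dvd, Int.ModEq]
  rcases le_or_gt 0 r with hr₀ | hr₀
  · have hmod : r % k = r := Int.emod_eq_of_lt hr₀ hlt
    have hmod_lt : n % k < k := Int.emod_lt_of_pos n hk
    omega
  · have hmod : r % k = r + k := by
      rw [← Int.add_emod_right, Int.emod_eq_of_lt (by linarith) (by linarith)]
    omega

theorem abs_lt_and_dvd_sub_iff {n k r : ℤ} (hk : 0 < k) (hkn : ¬k ∣ n) :
    |r| < k ∧ k ∣ n - r ↔ r = n % k ∨ r = n % k - k := by
  have hmod_pos : 0 < n % k := (Int.emod_pos_of_not_dvd hkn).resolve_left hk.ne'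
  have hmod_lt : n % k < k := Int.emod_lt_of_pos n hk
  rw [and_congr_right dvd_sub_iff_eq_emod_or_of_abs_lt, and_iff_right_iff_imp]
  rintro (rfl | rfl) <;> exact abs_lt.mpr ⟨by linarith, by linarith⟩

theorem lt_sub_div_of_lt_add_one_div {K : Type*} [Field K] [LinearOrder K] [IsStrictOrderedRing K]
    {x s k r : K} (hk : 0 < k) (hs : 0 < s + 1) (hks : k < (x + 1) / (s + 1)) (hr : r ≤ k - 1) :
    s < (x - r) / k := by
  rw [lt_div_iff₀ hs] at hks
  rw [lt_div_iff₀ hk]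
  linarith

theorem add_one_div_sqrt_two_mul_add_one_le {x : ℝ} (hx : 1 / 8 ≤ x) :
    (x + 1) / (√(2 * x) + 1) ≤ (√(2 * x) + 1) / 2 := by
  have hsq : √(2 * x) ^ 2 = 2 * x := Real.sq_sqrt (by linarith)
  have hhalf : 1 / 2 ≤ √(2 * x) := Real.le_sqrt_of_sq_le (by linarith)
  rw [div_le_iff₀ (by positivity)]
  linarith

/-- Counting lemma: each k < (n+1)/(√(2n)+1) with k ∤ n contributes exactly two
balanced remainders r, each giving a modulus d = (n-r)/k with d > √(2n) and
|r| ≤ (d-1)/2. -/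
theorem stmt_10 (n k : ℤ) (hn : 0 < n) (hk : 0 < k)
    (hkb : (k : ℝ) < ((n : ℝ) + 1) / (Real.sqrt (2 * (n : ℝ)) + 1))
    (hknd : ¬ k ∣ n) :
    ∃ r₁ r₂ : ℤ, r₁ ≠ r₂ ∧
      (∀ r : ℤ, (-(k - 1) ≤ r ∧ r ≤ k - 1 ∧ k ∣ (n - r)) ↔ (r = r₁ ∨ r = r₂)) ∧
      (∀ r : ℤ, -(k - 1) ≤ r → r ≤ k - 1 → k ∣ (n - r) →
        (((n - r) / k : ℤ) : ℝ) > Real.sqrt (2 * (n : ℝ)) ∧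
        (|r| : ℝ) ≤ ((((n - r) / k : ℤ) : ℝ) - 1) / 2) := by
  refine ⟨n % k, n % k - k, by linarith, fun r => ?_, fun r hr_ge hr_le hdvd => ?_⟩
  · rw [← abs_lt_and_dvd_sub_iff hk hknd, ← and_assoc, ← abs_le, Int.le_sub_one_iff]
  · have hk₀ : (0 : ℝ) < k := by exact_mod_cast hk
    have hn₁ : (1 : ℝ) ≤ n := by exact_mod_cast hn
    have hr_le' : (r : ℝ) ≤ k - 1 := by exact_mod_cast hr_le
    have habs : |(r : ℝ)| ≤ k - 1 := by exact_mod_cast abs_le.mpr ⟨hr_ge, hr_le⟩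
    have hquot : (((n - r) / k : ℤ) : ℝ) = (n - r) / k := by
      rw [Int.cast_div hdvd hk₀.ne', Int.cast_sub]
    have hd : √(2 * (n : ℝ)) < ((n - r) / k : ℤ) :=
      hquot ▸ lt_sub_div_of_lt_add_one_div hk₀ (by positivity) hkb hr_le'
    have hk_lt : (k : ℝ) < (√(2 * (n : ℝ)) + 1) / 2 :=
      hkb.trans_le (add_one_div_sqrt_two_mul_add_one_le (by linarith))
    exact ⟨hd, by linarith⟩
end

section
/- Let n, d, h be integers with n, d ≥ 1 and suppose k(n,d) ≥ |r(n,d)| + |h| + 1, where n = k(n,d)·d + r(n,d) with r(n,d) ∈ [-⌊d/2⌋, ⌈d/2⌉-1]. Then every finite sequence z₀, …, z_l of Gaussian integers with |z_{j+1} - z_j| = 1 for all consecutive terms and with z_{j₂} - z_{j₁} = n + i·h for some indices j₁, j₂, contains two terms z_{j₃}, z_{j₄} with z_{j₃} - z_{j₄} = d. -/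
/-!
Suppose that a lattice walk `P` realizes no difference `d`. Prolonging `P` vertically from a highest
and a lowest point separates the horizontal strip it spans: counting crossings with vertical rays
gives an index equal to `1` on the left, `0` on the right, and constant along king walks in the
strip that avoid `P`.

If `P + m d` is disjoint from `P`, it therefore lies to the right of `P`, whereas `P - d` lies to
the left. So `P + m d` and `P - d` are disjoint too, and by induction all translates `P + m d` are
pairwise disjoint (Hopf's chord theorem). A point of `P + k d` and a point of `P` that differ by
`r + i h` are joined by a king walk with `max |r| |h| + 1` terms, and this walk has to meet each of
the `k + 1` disjoint translates `P, P + d, …, P + k d`; hence `k ≤ max |r| |h|`.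
-/

open Finset

/-- The first `l` steps of `z` go to one of the four neighbours in the square lattice. -/
def IsLatticeWalk (z : ℕ → GaussianInt) (l : ℕ) : Prop :=
  ∀ j < l, (z (j + 1) - z j).norm = 1

/-- Two Gaussian integers at Chebyshev distance at most one: a king's move on the chessboard, or
no move at all. -/
def KingAdj (p q : GaussianInt) : Prop :=
  |q.re - p.re| ≤ 1 ∧ |q.im - p.im| ≤ 1

/-- The first `N` steps of `y` are king's moves; standing still is allowed. -/
def IsKingWalk (y : ℕ → GaussianInt) (N : ℕ) : Prop :=
  ∀ j < N, KingAdj (y j) (y (j + 1))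

/-- The complex number `w` is a difference of two of the terms `z 0, …, z l`. -/
def Realizes (z : ℕ → GaussianInt) (l : ℕ) (w : GaussianInt) : Prop :=
  ∃ j₂ j₁, j₂ ≤ l ∧ j₁ ≤ l ∧ z j₂ - z j₁ = w

/-- Signed crossing of the step from `u` to `w` with the upward vertical ray that starts at
`p + (1 + i) / 2`, counted positively from left to right. -/
def rayCrossing (p u w : GaussianInt) : ℤ :=
  if p.im < u.im then (if p.re < w.re then 1 else 0) - (if p.re < u.re then 1 else 0) else 0

/-- Signed number of crossings of the first `m` steps of `z` with the ray above `p`; see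
`rayCrossing`. -/
def crossingCount (z : ℕ → GaussianInt) (m : ℕ) (p : GaussianInt) : ℤ :=
  ∑ i ∈ range m, rayCrossing p (z i) (z (i + 1))

/-- The side of `p` with respect to the part of `z` between the times `s` and `t`, prolonged
vertically upwards from `z t` and downwards from `z s`: it is `1` to the left and `0` to the right
of this curve. The first term is its value far above `p`, from which one descends to `p`. Taking a
difference of two counts allows `t < s`. -/
def sideIndex (z : ℕ → GaussianInt) (s t : ℕ) (p : GaussianInt) : ℤ :=
  (if p.re < (z t).re then 1 else 0) -
    (crossingCount z t p - crossingCount z s p)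

theorem exists_forall_mem_Icc {α : Type*} [LinearOrder α] (f : ℕ → α) (l : ℕ) :
    ∃ s ≤ l, ∃ t ≤ l, ∀ j ≤ l, f j ∈ Set.Icc (f s) (f t) := by
  obtain ⟨s, hs, hmin⟩ := Set.exists_min_image _ f (Set.finite_Iic l) Set.nonempty_Iic
  obtain ⟨t, ht, hmax⟩ := Set.exists_max_image _ f (Set.finite_Iic l) Set.nonempty_Iic
  exact ⟨s, hs, t, ht, fun j hj => ⟨hmin j hj, hmax j hj⟩⟩

theorem natAbs_re_add_natAbs_im_eq_one {w : GaussianInt} (hw : w.norm = 1) :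
    w.re.natAbs + w.im.natAbs = 1 := by
  have hsq : w.re.natAbs ^ 2 + w.im.natAbs ^ 2 = 1 := by
    zify
    rw [sq_abs, sq_abs]
    linarith [Zsqrtd.norm_def w]
  have hre : w.re.natAbs ≤ 1 := by nlinarith
  have him : w.im.natAbs ≤ 1 := by nlinarith
  interval_cases w.re.natAbs <;> interval_cases w.im.natAbs <;> omega

theorem KingAdj.symm {p q : GaussianInt} (h : KingAdj p q) : KingAdj q p := by
  simpa only [KingAdj, abs_sub_comm] using h

theorem IsLatticeWalk.isKingWalk {z : ℕ → GaussianInt} {l : ℕ} (hz : IsLatticeWalk z l) :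
    IsKingWalk z l := fun j hj => by
  have := natAbs_re_add_natAbs_im_eq_one (hz j hj)
  simp only [Zsqrtd.re_sub, Zsqrtd.im_sub] at this
  simp only [KingAdj, Int.abs_eq_natAbs]
  omega

theorem IsKingWalk.add_const {y : ℕ → GaussianInt} {N : ℕ} (hy : IsKingWalk y N)
    (c : GaussianInt) : IsKingWalk (fun j => y j + c) N := fun j hj => by
  simpa [KingAdj] using hy j hj

theorem exists_isKingWalk {u w : GaussianInt} {N : ℕ} (hre : |w.re - u.re| ≤ N)
    (him : |w.im - u.im| ≤ N) :
    ∃ y, IsKingWalk y N ∧ y 0 = u ∧ y N = w ∧ ∀ j, (y j).im ∈ Set.uIcc u.im w.im := by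
  rw [abs_le] at hre him
  let clamp (j : ℕ) (x : ℤ) : ℤ := max (-j) (min j x)
  refine ⟨fun j => ⟨u.re + clamp j (w.re - u.re), u.im + clamp j (w.im - u.im)⟩,
    fun j _ => ?_, ?_, ?_, fun j => ?_⟩
  · simp only [KingAdj, abs_le, clamp]
    omega
  · ext <;> simp only [clamp] <;> omega
  · ext <;> simp only [clamp] <;> omega
  · simp only [Set.mem_uIcc, clamp]
    omega

theorem Realizes.neg {z : ℕ → GaussianInt} {l : ℕ} {w : GaussianInt} (h : Realizes z l w) :
    Realizes z l (-w) := by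
  obtain ⟨j₂, j₁, hj₂, hj₁, rfl⟩ := h
  exact ⟨j₁, j₂, hj₁, hj₂, (neg_sub _ _).symm⟩

/-- The right-hand side tests whether the step enters or leaves the half-strip enclosed by the two
rays and a path between their starting points; that path can be chosen to cross only lattice edges
with endpoint `p` or `q`. -/
theorem rayCrossing_sub_rayCrossing {p q u w : GaussianInt} (hpq : KingAdj p q)
    (hre : p.re ≤ q.re) (huw : (w - u).norm = 1) (hup : u ≠ p) (huq : u ≠ q) (hwp : w ≠ p)
    (hwq : w ≠ q) :
    rayCrossing p u w - rayCrossing q u w =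
      (if w.re ∈ Set.Ioc p.re q.re ∧ min p.im q.im < w.im then 1 else 0) -
        (if u.re ∈ Set.Ioc p.re q.re ∧ min p.im q.im < u.im then 1 else 0) := by
  have huw := natAbs_re_add_natAbs_im_eq_one huw
  simp only [KingAdj, abs_le, Zsqrtd.re_sub, Zsqrtd.im_sub, ne_eq, Zsqrtd.ext_iff] at *
  simp only [rayCrossing, Set.mem_Ioc]
  split_ifs <;> omega

section Walk

variable {z : ℕ → GaussianInt} {l s t : ℕ}

theorem IsLatticeWalk.crossingCount_sub_crossingCount (hz : IsLatticeWalk z l) {p q : GaussianInt}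
    (hpq : KingAdj p q) (hre : p.re ≤ q.re) (hp : ∀ j ≤ l, z j ≠ p) (hq : ∀ j ≤ l, z j ≠ q)
    {m : ℕ} (hm : m ≤ l) :
    crossingCount z m p - crossingCount z m q =
      (if (z m).re ∈ Set.Ioc p.re q.re ∧ min p.im q.im < (z m).im then 1 else 0) -
        (if (z 0).re ∈ Set.Ioc p.re q.re ∧ min p.im q.im < (z 0).im then 1 else 0) := by
  rw [crossingCount, crossingCount, ← sum_sub_distrib, ← sum_range_sub fun i =>
    if (z i).re ∈ Set.Ioc p.re q.re ∧ min p.im q.im < (z i).im then (1 : ℤ) else 0]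
  refine sum_congr rfl fun i hi => ?_
  have hil : i < l := (mem_range.1 hi).trans_le hm
  exact rayCrossing_sub_rayCrossing hpq hre (hz i hil) (hp i hil.le) (hq i hil.le)
    (hp _ hil) (hq _ hil)

theorem IsLatticeWalk.sideIndex_eq_of_kingAdj (hz : IsLatticeWalk z l) (hs : s ≤ l) (ht : t ≤ l)
    {p q : GaussianInt} (hpq : KingAdj p q) (hp : ∀ j ≤ l, z j ≠ p) (hq : ∀ j ≤ l, z j ≠ q)
    (hpst : p.im ∈ Set.Icc (z s).im (z t).im) (hqst : q.im ∈ Set.Icc (z s).im (z t).im) :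
    sideIndex z s t p = sideIndex z s t q := by
  wlog hre : p.re ≤ q.re generalizing p q
  · exact (this hpq.symm hq hp hqst hpst (le_of_not_ge hre)).symm
  have hsum_s := hz.crossingCount_sub_crossingCount hpq hre hp hq hs
  have hsum_t := hz.crossingCount_sub_crossingCount hpq hre hp hq ht
  have hbottom : ¬((z s).re ∈ Set.Ioc p.re q.re ∧ min p.im q.im < (z s).im) := fun h =>
    h.2.not_ge (le_min hpst.1 hqst.1)
  have htop : ((z t).re ∈ Set.Ioc p.re q.re ∧ min p.im q.im < (z t).im) ↔
      (z t).re ∈ Set.Ioc p.re q.re := by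
    have hqt := hq t ht
    simp only [ne_eq, Zsqrtd.ext_iff, KingAdj, abs_le, Set.mem_Icc, Set.mem_Ioc] at *
    omega
  have hend : (if p.re < (z t).re then (1 : ℤ) else 0) - (if q.re < (z t).re then 1 else 0) =
      if (z t).re ∈ Set.Ioc p.re q.re then 1 else 0 := by
    simp only [Set.mem_Ioc]
    split_ifs <;> omega
  rw [if_neg hbottom] at hsum_s
  simp only [htop] at hsum_t
  unfold sideIndex
  linarith

theorem IsLatticeWalk.sideIndex_eq_of_isKingWalk (hz : IsLatticeWalk z l) (hs : s ≤ l)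
    (ht : t ≤ l) {y : ℕ → GaussianInt} {N : ℕ} (hy : IsKingWalk y N)
    (hyst : ∀ i ≤ N, (y i).im ∈ Set.Icc (z s).im (z t).im)
    (hyz : ∀ i ≤ N, ∀ j ≤ l, z j ≠ y i) {i : ℕ} (hi : i ≤ N) :
    sideIndex z s t (y i) = sideIndex z s t (y 0) := by
  induction i with
  | zero => rfl
  | succ i ih =>
    have hi' : i ≤ N := i.le_succ.trans hi
    rw [← ih hi']
    exact (hz.sideIndex_eq_of_kingAdj hs ht (hy i hi) (hyz i hi') (hyz _ hi) (hyst i hi')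
      (hyst _ hi)).symm

theorem crossingCount_eq_zero {m : ℕ} {p : GaussianInt}
    (hp : ∀ i < m, (p.re < (z (i + 1)).re ↔ p.re < (z i).re)) : crossingCount z m p = 0 :=
  sum_eq_zero fun i hi => by simp [rayCrossing, hp i (mem_range.1 hi)]

theorem sideIndex_eq_zero (hs : s ≤ l) (ht : t ≤ l) {p : GaussianInt}
    (hp : ∀ j ≤ l, (z j).re ≤ p.re) : sideIndex z s t p = 0 := by
  have hcount : ∀ m ≤ l, crossingCount z m p = 0 := fun m hm =>
    crossingCount_eq_zero fun i hi =>
      iff_of_false (hp _ (by omega)).not_gt (hp _ (by omega)).not_gt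
  rw [sideIndex, hcount s hs, hcount t ht, if_neg (hp t ht).not_gt, sub_self, sub_self]

theorem sideIndex_eq_one (hs : s ≤ l) (ht : t ≤ l) {p : GaussianInt}
    (hp : ∀ j ≤ l, p.re < (z j).re) : sideIndex z s t p = 1 := by
  have hcount : ∀ m ≤ l, crossingCount z m p = 0 := fun m hm =>
    crossingCount_eq_zero fun i hi => iff_of_true (hp _ (by omega)) (hp _ (by omega))
  rw [sideIndex, hcount s hs, hcount t ht, if_pos (hp t ht), sub_self, sub_zero]

theorem IsLatticeWalk.sideIndex_add_eq_of_not_realizes (hz : IsLatticeWalk z l) (hs : s ≤ l)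
    (ht : t ≤ l) (hst : ∀ j ≤ l, (z j).im ∈ Set.Icc (z s).im (z t).im) {D : ℤ}
    (hD : ¬Realizes z l D) {a b : ℕ} (ha : a ≤ l) (hb : b ≤ l) :
    sideIndex z s t (z a + D) = sideIndex z s t (z b + D) := by
  have hconst {i : ℕ} (hi : i ≤ l) :=
    hz.sideIndex_eq_of_isKingWalk hs ht (hz.isKingWalk.add_const D) (by simpa using hst)
      (fun i hi j hj e => hD ⟨j, i, hj, hi, sub_eq_of_eq_add' e⟩) hi
  exact (hconst ha).trans (hconst hb).symm

theorem IsLatticeWalk.sideIndex_add_eq_zero (hz : IsLatticeWalk z l) (hs : s ≤ l) (ht : t ≤ l)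
    (hst : ∀ j ≤ l, (z j).im ∈ Set.Icc (z s).im (z t).im) {D : ℤ} (hpos : 0 < D)
    (hD : ¬Realizes z l D) {a : ℕ} (ha : a ≤ l) : sideIndex z s t (z a + D) = 0 := by
  obtain ⟨_, _, b, hb, hbmax⟩ := exists_forall_mem_Icc (fun j => (z j).re) l
  rw [hz.sideIndex_add_eq_of_not_realizes hs ht hst hD ha hb]
  refine sideIndex_eq_zero hs ht fun j hj => ?_
  simpa using (hbmax j hj).2.trans (le_add_of_nonneg_right hpos.le)

theorem IsLatticeWalk.sideIndex_sub_eq_one (hz : IsLatticeWalk z l) (hs : s ≤ l) (ht : t ≤ l)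
    (hst : ∀ j ≤ l, (z j).im ∈ Set.Icc (z s).im (z t).im) {D : ℤ} (hpos : 0 < D)
    (hD : ¬Realizes z l D) {a : ℕ} (ha : a ≤ l) : sideIndex z s t (z a - D) = 1 := by
  obtain ⟨b, hb, _, _, hbmin⟩ := exists_forall_mem_Icc (fun j => (z j).re) l
  have hneg : ¬Realizes z l (-D : ℤ) := fun h => hD (by simpa using h.neg)
  have hconst := hz.sideIndex_add_eq_of_not_realizes hs ht hst hneg ha hb
  rw [Int.cast_neg, ← sub_eq_add_neg, ← sub_eq_add_neg] at hconst
  rw [hconst]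
  refine sideIndex_eq_one hs ht fun j hj => ?_
  simpa using (sub_lt_self _ hpos).trans_le (hbmin j hj).1

theorem IsLatticeWalk.not_realizes_mul (hz : IsLatticeWalk z l) {d : ℤ} (hd : 0 < d)
    (hzd : ¬Realizes z l d) {m : ℤ} (hm : 0 < m) : ¬Realizes z l (m * d : ℤ) := by
  obtain ⟨s, hs, t, ht, hst⟩ := exists_forall_mem_Icc (fun j => (z j).im) l
  induction m, Int.add_one_le_of_lt hm using Int.leInduction with
  | base => simpa using hzd
  | succ m hm' ih =>
    rintro ⟨j, i, hj, hi, hji⟩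
    have hm : 0 < m := by omega
    have hright : sideIndex z s t (z i + (m * d : ℤ)) = 0 :=
      hz.sideIndex_add_eq_zero hs ht hst (mul_pos hm hd) (ih hm) hi
    have hleft : sideIndex z s t (z j - d) = 1 := hz.sideIndex_sub_eq_one hs ht hst hd hzd hj
    have heq : z j - d = z i + (m * d : ℤ) := by
      rw [eq_add_of_sub_eq' hji]
      push_cast
      ring
    rw [heq, hright] at hleft
    exact zero_ne_one hleft

theorem IsLatticeWalk.eq_zero_of_realizes_mul (hz : IsLatticeWalk z l) {d : ℤ} (hd : 0 < d)
    (hzd : ¬Realizes z l d) {m : ℤ} (hm : Realizes z l (m * d : ℤ)) : m = 0 := by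
  rcases lt_trichotomy m 0 with hneg | hzero | hpos
  · exact (hz.not_realizes_mul hd hzd (neg_pos.2 hneg) (by simpa using hm.neg)).elim
  · exact hzero
  · exact (hz.not_realizes_mul hd hzd hpos hm).elim

theorem IsLatticeWalk.exists_eq_of_isKingWalk (hz : IsLatticeWalk z l) (hs : s ≤ l) (ht : t ≤ l)
    (hst : ∀ j ≤ l, (z j).im ∈ Set.Icc (z s).im (z t).im) {y : ℕ → GaussianInt} {N : ℕ}
    (hy : IsKingWalk y N) (hyst : ∀ i ≤ N, (y i).im ∈ Set.Icc (z s).im (z t).im) {D E : ℤ}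
    (hDpos : 0 < D) (hEpos : 0 < E) (hD : ¬Realizes z l D) (hE : ¬Realizes z l E) {a b : ℕ}
    (ha : a ≤ l) (hb : b ≤ l) (hy0 : y 0 = z a + D) (hyN : y N = z b - E) :
    ∃ i ≤ N, ∃ j ≤ l, y i = z j := by
  by_contra! hyz
  have hconst := hz.sideIndex_eq_of_isKingWalk hs ht hy hyst
    (fun i hi j hj => (hyz i hi j hj).symm) le_rfl
  rw [hy0, hyN, hz.sideIndex_add_eq_zero hs ht hst hDpos hD ha,
    hz.sideIndex_sub_eq_one hs ht hst hEpos hE hb] at hconst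
  exact one_ne_zero hconst

theorem IsLatticeWalk.exists_eq_add_mul_of_isKingWalk (hz : IsLatticeWalk z l) {d : ℤ}
    (hd : 0 < d) (hzd : ¬Realizes z l d) {a b : ℕ} (ha : a ≤ l) (hb : b ≤ l) {k : ℤ}
    {y : ℕ → GaussianInt} {N : ℕ} (hy : IsKingWalk y N) (hy0 : y 0 = z a + (k * d : ℤ))
    (hyN : y N = z b) (hyab : ∀ i, (y i).im ∈ Set.uIcc (z a).im (z b).im) {m : ℤ}
    (hm : m ∈ Set.Icc 0 k) : ∃ i ≤ N, ∃ j ≤ l, y i = z j + (m * d : ℤ) := by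
  rcases hm.1.eq_or_lt with rfl | hm_pos
  · exact ⟨N, le_rfl, b, hb, by simp [hyN]⟩
  rcases hm.2.eq_or_lt with rfl | hm_lt
  · exact ⟨0, N.zero_le, a, ha, hy0⟩
  obtain ⟨s, hs, t, ht, hst⟩ := exists_forall_mem_Icc (fun j => (z j).im) l
  have hyst (i : ℕ) : (y i).im ∈ Set.Icc (z s).im (z t).im :=
    Set.uIcc_subset_Icc (hst a ha) (hst b hb) (hyab i)
  have hkm : 0 < k - m := sub_pos.2 hm_lt
  obtain ⟨i, hi, j, hj, hij⟩ := hz.exists_eq_of_isKingWalk hs ht hst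
    (hy.add_const (-(m * d : ℤ))) (by simpa using fun i _ => hyst i)
    (mul_pos hkm hd) (mul_pos hm_pos hd) (hz.not_realizes_mul hd hzd hkm)
    (hz.not_realizes_mul hd hzd hm_pos) ha hb
    (by rw [hy0]; push_cast; ring) (by rw [hyN, sub_eq_add_neg])
  exact ⟨i, hi, j, hj, eq_add_of_add_neg_eq hij⟩

theorem IsLatticeWalk.le_of_realizes_mul_add (hz : IsLatticeWalk z l) {d : ℤ} (hd : 0 < d)
    (hzd : ¬Realizes z l d) {k r h : ℤ} {N : ℕ} (hr : |r| ≤ N) (hh : |h| ≤ N)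
    (hreal : Realizes z l ⟨k * d + r, h⟩) : k ≤ N := by
  obtain ⟨b, a, hb, ha, hab⟩ := hreal
  obtain ⟨hre, him⟩ := Zsqrtd.ext_iff.1 hab
  simp only [Zsqrtd.re_sub, Zsqrtd.im_sub] at hre him
  obtain ⟨y, hy, hy0, hyN, hyim⟩ := exists_isKingWalk (u := z a + (k * d : ℤ)) (w := z b) (N := N)
    (by simpa [← sub_sub, hre] using hr) (by simpa [him] using hh)
  have hmeet : ∀ m ∈ Icc 0 k, ∃ i ≤ N, ∃ j ≤ l, y i = z j + (m * d : ℤ) := fun m hm =>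
    hz.exists_eq_add_mul_of_isKingWalk hd hzd ha hb hy hy0 hyN (by simpa using hyim)
      (mem_Icc.1 hm)
  choose! f hf c hc hfc using hmeet
  have hinj : Set.InjOn f (Icc 0 k) := fun m hm m' hm' hmm' => by
    have hcc : z (c m') - z (c m) = ((m - m') * d : ℤ) := by
      have := (hfc m hm).symm.trans ((congrArg y hmm').trans (hfc m' hm'))
      push_cast at this ⊢
      linear_combination -this
    exact sub_eq_zero.1 (hz.eq_zero_of_realizes_mul hd hzd ⟨_, _, hc m' hm', hc m hm, hcc⟩)
  have hcard := card_le_card_of_injOn (t := range (N + 1)) f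
    (fun m hm => by simpa [Nat.lt_succ_iff] using hf m hm) hinj
  rw [Int.card_Icc, card_range] at hcard
  omega

end Walk

theorem stmt_16_general (n d h : ℤ) (hd : 0 < d) (k r : ℤ) (hkr : n = k * d + r)
    (hk : max |r| |h| < k) (l : ℕ) (z : ℕ → GaussianInt) (hz : IsLatticeWalk z l)
    (hreal : Realizes z l ⟨n, h⟩) : Realizes z l d := by
  by_contra hzd
  rw [hkr] at hreal
  have hle : k ≤ (max r.natAbs h.natAbs : ℕ) :=
    hz.le_of_realizes_mul_add hd hzd (by simp) (by simp) hreal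
  push_cast at hle
  exact hk.not_ge hle

/-- Generalized unavoidability: if k(n,d) ≥ |r(n,d)| + |h| + 1 then every
unit-step walk realizing the complex difference n + ih realizes d. -/
theorem stmt_16 (n d h : ℤ) (hn : 1 ≤ n) (hd : 1 ≤ d)
    (k r : ℤ) (hkr : n = k * d + r)
    (hr1 : -(d / 2) ≤ r) (hr2 : r ≤ (d + 1) / 2 - 1)
    (hk : k ≥ |r| + |h| + 1)
    (l : ℕ) (z : ℕ → GaussianInt)
    (hstep : ∀ j < l, (z (j + 1) - z j).norm = 1)
    (hreal : ∃ j₂ j₁, j₂ ≤ l ∧ j₁ ≤ l ∧ z j₂ - z j₁ = (⟨n, h⟩ : GaussianInt)) :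
    ∃ j₃ j₄, j₃ ≤ l ∧ j₄ ≤ l ∧ z j₃ - z j₄ = (d : GaussianInt) := by
  have hmax : max |r| |h| < k := by grind
  exact stmt_16_general n d h hd k r hkr hmax l z hstep hreal
end
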